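/- arXiv:0806.3915 — 2 statements merged into one kernel-verified Lean document; each statement's English description precedes it below -/
import Mathlib

section
/- Let X be a geodesic Gromov hyperbolic metric space and φ: X → Y a quasi-isometry onto a metric space Y. Then Y is Gromov hyperbolic if and only if Y is quasiruled. -/
open Filter MeasureTheory Topology Metric Set
open scoped ENNReal

noncomputable section

namespace GHM

/-! ### Coarse geometry of distance functions -/

/-- The Gromov product `(x|y)_w` of `x` and `y` seen from `w`, for a distance function `d`. -/
def gromov {X : Type*} (d : X → X → ℝ) (w x y : X) : ℝ :=
  (d x w + d y w - d x y) / 2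

/-- `d` is `δ`-hyperbolic (four point condition on Gromov products). -/
def IsHyperbolicWith {X : Type*} (d : X → X → ℝ) (δ : ℝ) : Prop :=
  ∀ w x y z : X, min (gromov d w x y) (gromov d w x z) - δ ≤ gromov d w y z

/-- `d` is Gromov hyperbolic. -/
def IsHyperbolic {X : Type*} (d : X → X → ℝ) : Prop :=
  ∃ δ : ℝ, 0 ≤ δ ∧ IsHyperbolicWith d δ

/-- `d` is a genuine metric. -/
structure IsMetricFun {X : Type*} (d : X → X → ℝ) : Prop where
  refl : ∀ x, d x x = 0
  pos : ∀ x y, x ≠ y → 0 < d x y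
  symm : ∀ x y, d x y = d y x
  triangle : ∀ x y z, d x z ≤ d x y + d y z

/-- `f` is a `(Λ,c)`-quasi-isometric embedding from `(X,dX)` to `(Y,dY)`. -/
def QIEmbed {X Y : Type*} (dX : X → X → ℝ) (dY : Y → Y → ℝ)
    (f : X → Y) (Λ c : ℝ) : Prop :=
  ∀ x x' : X, dX x x' / Λ - c ≤ dY (f x) (f x') ∧ dY (f x) (f x') ≤ Λ * dX x x' + c

/-- `(X,dX)` and `(Y,dY)` are quasi-isometric. -/
def QuasiIsometric {X Y : Type*} (dX : X → X → ℝ) (dY : Y → Y → ℝ) : Prop :=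
  ∃ (f : X → Y) (Λ c C : ℝ), 1 ≤ Λ ∧ 0 ≤ c ∧ 0 ≤ C ∧
    QIEmbed dX dY f Λ c ∧ ∀ y : Y, ∃ x : X, dY (f x) y ≤ C

variable {G : Type*} [Group G]

/-- Word length of `g` with respect to the (symmetrized) finite set `S`. -/
def wordLength (S : Finset G) (g : G) : ℕ :=
  sInf {n : ℕ | ∃ l : List G, l.length = n ∧ (∀ a ∈ l, a ∈ S ∨ a⁻¹ ∈ S) ∧ l.prod = g}

/-- The word metric associated with a finite generating set `S`. -/
def wordDist (S : Finset G) (x y : G) : ℝ := wordLength S (x⁻¹ * y)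

/-- `S` generates the group. -/
def Generates (S : Finset G) : Prop := Subgroup.closure (S : Set G) = ⊤

/-- The standard metric on `ℤ`. -/
def intDist (m n : ℤ) : ℝ := |(m : ℝ) - (n : ℝ)|

/-- `G` is a non-elementary hyperbolic group: finitely generated, its word metrics are
Gromov hyperbolic, it is infinite, and it is not quasi-isometric to `ℤ`. -/
def NonElemHyperbolic (G : Type*) [Group G] : Prop :=
  Infinite G ∧ (∃ S : Finset G, Generates S) ∧
    ∀ S : Finset G, Generates S →
      IsHyperbolic (wordDist S) ∧ ¬ QuasiIsometric (wordDist S) intDist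

/-- `d` is invariant under left translations. -/
def LeftInvariant (d : G → G → ℝ) : Prop := ∀ g x y : G, d (g * x) (g * y) = d x y

/-- `d` belongs to the class `𝒟(Γ)`: it is a left-invariant Gromov hyperbolic metric on the
group, quasi-isometric to a word metric of a finite generating set. -/
def MemD (d : G → G → ℝ) : Prop :=
  IsMetricFun d ∧ LeftInvariant d ∧ IsHyperbolic d ∧
    ∃ S : Finset G, Generates S ∧ QuasiIsometric d (wordDist S)

/-! ### Random walks -/

/-- `μ` is (the density of) a probability measure on the (countable) group. -/
def IsProbDensity (μ : G → ℝ) : Prop := (∀ g, 0 ≤ μ g) ∧ HasSum μ 1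

/-- `μ` is symmetric. -/
def IsSymmetric (μ : G → ℝ) : Prop := ∀ g : G, μ g⁻¹ = μ g

/-- The support of `μ` generates `G`. -/
def GeneratesSupp (μ : G → ℝ) : Prop := Subgroup.closure {g : G | μ g ≠ 0} = ⊤

open scoped Classical in
/-- Convolution powers `μ^n` of `μ`. -/
def convPow (μ : G → ℝ) : ℕ → G → ℝ
  | 0 => fun g => if g = 1 then 1 else 0
  | n + 1 => fun g => ∑' y : G, convPow μ n y * μ (y⁻¹ * g)

/-- The Green function `G(x,y) = ∑_n μ^n(x⁻¹y)`. -/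
def greenFn (μ : G → ℝ) (x y : G) : ℝ := ∑' n : ℕ, convPow μ n (x⁻¹ * y)

/-- The random walk is transient, i.e. `G(e,e) = ∑_n μ^n(e) < ∞`. -/
def Transient (μ : G → ℝ) : Prop := Summable fun n : ℕ => convPow μ n (1 : G)

/-- Successive positions of a walk started at `x` with increments `l`. -/
def walkPositions (x : G) (l : List G) : List G := l.scanl (fun p a => p * a) x

/-- The increments `l` describe a trajectory from `x` which hits `y` for the first time at
its final position. -/
def IsFirstHitPath (x y : G) (l : List G) : Prop :=
  (walkPositions x l).getLast? = some y ∧ y ∉ (walkPositions x l).dropLast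

/-- `F(x,y)`: the probability that the `μ`-random walk started at `x` ever hits `y`. -/
def hitProb (μ : G → ℝ) (x y : G) : ℝ :=
  ∑' l : {l : List G // IsFirstHitPath x y l}, ((l : List G).map μ).prod

/-- The Green metric `d_G(x,y) = - log F(x,y)`. -/
def greenDist (μ : G → ℝ) (x y : G) : ℝ := - Real.log (hitProb μ x y)

/-- `μ` has a finite first moment with respect to `d`. -/
def FiniteFirstMoment (d : G → G → ℝ) (μ : G → ℝ) : Prop :=
  Summable fun g : G => d 1 g * μ g

/-- `μ` has an exponential moment with respect to `d`. -/
def HasExpMoment (d : G → G → ℝ) (μ : G → ℝ) : Prop :=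
  ∃ lam : ℝ, 0 < lam ∧ Summable fun g : G => Real.exp (lam * d 1 g) * μ g

/-- The entropy `H(μ^n) = -∑_γ μ^n(γ) log μ^n(γ)` of the `n`-th convolution power. -/
def entropyAt (μ : G → ℝ) (n : ℕ) : ℝ :=
  - ∑' g : G, convPow μ n g * Real.log (convPow μ n g)

/-- `h` is the asymptotic entropy of the walk. -/
def HasEntropy (μ : G → ℝ) (h : ℝ) : Prop :=
  Tendsto (fun n : ℕ => entropyAt μ n / n) atTop (𝓝 h)

/-- `v` is the logarithmic volume growth of `(G,d)` (seen from the identity). -/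
def HasGrowth (d : G → G → ℝ) (v : ℝ) : Prop :=
  Filter.limsup (fun R : ℝ => Real.log (Nat.card {g : G // d 1 g ≤ R}) / R) atTop = v

/-- The position `Z_n = ω_0 ω_1 ⋯ ω_{n-1}` of the random walk at time `n`, given the
sequence of increments `ω`. -/
def walkPos (n : ℕ) (ω : ℕ → G) : G := ((List.range n).map ω).prod

/-- `P` is the law on the space of increment sequences of an i.i.d. sequence of law `μ`:
cylinders have product measure.  (This characterizes the path measure of the random walk.) -/
def IsWalkMeasure [MeasurableSpace G] (μ : G → ℝ) (P : Measure (ℕ → G)) : Prop :=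
  IsProbabilityMeasure P ∧
    ∀ (n : ℕ) (g : Fin n → G),
      P {ω : ℕ → G | ∀ i : Fin n, ω (i : ℕ) = g i} = ∏ i : Fin n, ENNReal.ofReal (μ (g i))

/-! ### The Gromov boundary, visual metrics, harmonic and quasiconformal measures -/

/-- A sequence tends to infinity if Gromov products (at the base point `1`) go to `∞`. -/
def TendstoInfinity (d : G → G → ℝ) (u : ℕ → G) : Prop :=
  Tendsto (fun p : ℕ × ℕ => gromov d 1 (u p.1) (u p.2)) atTop atTop

/-- A realization of the Gromov boundary of `(G,d)` as an abstract type `B`: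
`conv u b` means that the sequence `u` converges at infinity to the boundary point `b`.
The group acts on its boundary by `smul`. -/
structure BoundaryData (G : Type*) [Group G] (d : G → G → ℝ) (B : Type*) where
  conv : (ℕ → G) → B → Prop
  smul : G → B → B
  conv_unique : ∀ u b b', conv u b → conv u b' → b = b'
  exists_conv : ∀ u, TendstoInfinity d u → ∃ b, conv u b
  conv_tendstoInfinity : ∀ u b, conv u b → TendstoInfinity d u
  conv_iff : ∀ u v b, conv u b →
    (conv v b ↔ Tendsto (fun n => gromov d 1 (u n) (v n)) atTop atTop)
  conv_surj : ∀ b, ∃ u, conv u b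
  smul_conv : ∀ (γ : G) (u) (b), conv u b → conv (fun n => γ * u n) (smul γ b)

/-- Asymptotic Gromov product of two sequences. -/
def seqGromov (d : G → G → ℝ) (u v : ℕ → G) : ℝ :=
  Filter.liminf (fun n => gromov d 1 (u n) (v n)) atTop

/-- The metric of `B` is a visual metric of parameter `ε` (with comparison constant `C`)
for the hyperbolic distance `d` on the group:  `dist(a,b) ≍ exp(-ε (a|b))`. -/
def IsVisualMetric {B : Type*} [MetricSpace B] (d : G → G → ℝ)
    (bd : BoundaryData G d B) (ε C : ℝ) : Prop :=
  0 < ε ∧ 0 < C ∧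
    ∀ u v b b', bd.conv u b → bd.conv v b' → b ≠ b' →
      dist b b' ≤ C * Real.exp (-ε * seqGromov d u v) ∧
      Real.exp (-ε * seqGromov d u v) ≤ C * dist b b'

/-- `ν` is the harmonic measure of the random walk of law `μ` on the boundary `B`:
it is the law of the almost sure limit `Z_∞` of the walk on the boundary. -/
def IsHarmonicMeasure {B : Type*} [MeasurableSpace G] [MeasurableSpace B]
    (d : G → G → ℝ) (bd : BoundaryData G d B) (μ : G → ℝ)
    (P : Measure (ℕ → G)) (ν : Measure B) : Prop :=
  IsWalkMeasure μ P ∧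
    ∃ Zinf : (ℕ → G) → B, Measurable Zinf ∧
      (∀ᵐ ω ∂P, bd.conv (fun n => walkPos n ω) (Zinf ω)) ∧ ν = P.map Zinf

/-- Busemann function `β_b(x,y)` of the boundary point `b`. -/
def busemann {B : Type*} (d : G → G → ℝ) (bd : BoundaryData G d B)
    (x y : G) (b : B) : ℝ :=
  sSup {t : ℝ | ∃ u, bd.conv u b ∧
    t = Filter.limsup (fun n => d x (u n) - d y (u n)) atTop}

/-- The image measure `γ^*ρ`, `γ^*ρ(A) = ρ(γA)`. -/
def actPush {B : Type*} [MeasurableSpace B] {d : G → G → ℝ}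
    (bd : BoundaryData G d B) (γ : G) (ρ : Measure B) : Measure B :=
  ρ.map (bd.smul γ⁻¹)

/-- `ρ` is a quasiconformal measure on the boundary for `(G,d)` of logarithmic growth
parameter `v`: `γ^*ρ` and `ρ` are mutually absolutely continuous, with density
`dγ^*ρ/dρ ≍ exp (v β_b(1,γ⁻¹))` (uniformly in `γ`). -/
def IsQuasiconformalMeasure {B : Type*} [MeasurableSpace B] {d : G → G → ℝ}
    (bd : BoundaryData G d B) (ρ : Measure B) (v : ℝ) : Prop :=
  ∃ C : ℝ, 0 < C ∧ ∀ γ : G,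
    actPush bd γ ρ ≪ ρ ∧ ρ ≪ actPush bd γ ρ ∧
      ∀ᵐ b ∂ρ,
        (actPush bd γ ρ).rnDeriv ρ b
            ≤ ENNReal.ofReal (C * Real.exp (v * busemann d bd 1 γ⁻¹ b)) ∧
        ENNReal.ofReal (C⁻¹ * Real.exp (v * busemann d bd 1 γ⁻¹ b))
            ≤ (actPush bd γ ρ).rnDeriv ρ b

/-- `ν` is Ahlfors regular of dimension `α`: `ν(B(b,r)) ≍ r^α`. -/
def AhlforsRegularOfDim {B : Type*} [MetricSpace B] [MeasurableSpace B]
    (ν : Measure B) (α : ℝ) : Prop :=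
  ∃ C : ℝ, 0 < C ∧ ∀ (b : B) (r : ℝ), 0 < r → r ≤ Metric.diam (Set.univ : Set B) →
    ENNReal.ofReal (C⁻¹ * r ^ α) ≤ ν (Metric.ball b r) ∧
      ν (Metric.ball b r) ≤ ENNReal.ofReal (C * r ^ α)

/-- The Hausdorff dimension of a measure: the infimum of the Hausdorff dimensions of sets of
full measure. -/
def measureDim {B : Type*} [EMetricSpace B] [MeasurableSpace B] (ν : Measure B) : ℝ≥0∞ :=
  ⨅ (A : Set B) (_ : ν Aᶜ = 0), dimH A

/-! ### Word geodesics -/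

/-- `p 0, …, p n` is a geodesic segment for the word metric of `S`. -/
def IsWordGeodesic (S : Finset G) (n : ℕ) (p : ℕ → G) : Prop :=
  ∀ i j : ℕ, i ≤ n → j ≤ n → wordDist S (p i) (p j) = |(i : ℝ) - (j : ℝ)|

/-- `v` lies within distance `r` of some word geodesic segment from `x` to `y`. -/
def NearWordGeodesic (S : Finset G) (x y v : G) (r : ℝ) : Prop :=
  ∃ (n : ℕ) (p : ℕ → G), IsWordGeodesic S n p ∧ p 0 = x ∧ p n = y ∧
    ∃ i ≤ n, wordDist S v (p i) ≤ r

/-! ### Martin boundary -/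

/-- The Martin kernel `K(x,y) = G(x,y)/G(e,y)`. -/
def martinKernel (μ : G → ℝ) (x y : G) : ℝ := greenFn μ x y / greenFn μ 1 y

/-- The embedding `y ↦ K(·,y)` of the group in `C(G)` (pointwise topology). -/
def martinMap (μ : G → ℝ) (y : G) : G → ℝ := fun x => martinKernel μ x y

/-- The Martin boundary: the boundary of the image of the group under the Martin embedding
in the space of functions with the topology of pointwise convergence. -/
def martinBoundary (μ : G → ℝ) : Set (G → ℝ) :=
  closure (Set.range (martinMap μ)) \ Set.range (martinMap μ)

/-- `h` is a `μ`-harmonic function. -/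
def IsHarmonicFn (μ : G → ℝ) (h : G → ℝ) : Prop :=
  ∀ x : G, h x = ∑' y : G, h y * μ (x⁻¹ * y)

/-- `h` is a minimal positive harmonic function. -/
def IsMinimalHarmonic (μ : G → ℝ) (h : G → ℝ) : Prop :=
  IsHarmonicFn μ h ∧ (∀ x, 0 < h x) ∧
    ∀ u : G → ℝ, IsHarmonicFn μ u → (∀ x, 0 ≤ u x) → (∀ x, u x ≤ h x) →
      ∃ c : ℝ, u = fun x => c * h x

/-! ### Metric space versions (geodesic and quasiruled spaces) -/

/-- A geodesic metric space. -/
def IsGeodesicSpace (X : Type*) [MetricSpace X] : Prop :=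
  ∀ x y : X, ∃ f : ℝ → X, f 0 = x ∧ f (dist x y) = y ∧
    ∀ s ∈ Set.Icc (0:ℝ) (dist x y), ∀ t ∈ Set.Icc (0:ℝ) (dist x y),
      dist (f s) (f t) = |s - t|

/-- `f : [a,b] → Y` is a `(Λ,c)`-quasigeodesic segment. -/
def IsQuasigeodesicOn {Y : Type*} [MetricSpace Y] (f : ℝ → Y) (a b Λ c : ℝ) : Prop :=
  ∀ s ∈ Set.Icc a b, ∀ t ∈ Set.Icc a b,
    |s - t| / Λ - c ≤ dist (f s) (f t) ∧ dist (f s) (f t) ≤ Λ * |s - t| + c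

/-- `f : [a,b] → Y` is a `τ`-quasiruler: Gromov products of triples along it are `≤ τ`. -/
def IsQuasirulerOn {Y : Type*} [MetricSpace Y] (f : ℝ → Y) (a b τ : ℝ) : Prop :=
  ∀ s t u : ℝ, s ∈ Set.Icc a b → t ∈ Set.Icc a b → u ∈ Set.Icc a b → s ≤ t → t ≤ u →
    dist (f s) (f t) + dist (f t) (f u) ≤ dist (f s) (f u) + 2 * τ

/-- A quasiruled metric space: for some constants `(Λ,c,τ)` every pair of points is joined
by a `(Λ,c)`-quasigeodesic, and every `(Λ,c)`-quasigeodesic is a `τ`-quasiruler. -/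
def Quasiruled (Y : Type*) [MetricSpace Y] : Prop :=
  ∃ Λ c τ : ℝ, 1 ≤ Λ ∧ 0 ≤ c ∧ 0 ≤ τ ∧
    (∀ x y : Y, ∃ (a b : ℝ) (f : ℝ → Y), a ≤ b ∧ f a = x ∧ f b = y ∧
      IsQuasigeodesicOn f a b Λ c) ∧
    ∀ (f : ℝ → Y) (a b : ℝ), IsQuasigeodesicOn f a b Λ c → IsQuasirulerOn f a b τ

/-- A metric space is hyperbolic. -/
def HypSpace (Y : Type*) [MetricSpace Y] : Prop :=
  IsHyperbolic (fun x y : Y => dist x y)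

/-- `f` is a quasi-isometry between metric spaces. -/
def MetricQI {X Y : Type*} [MetricSpace X] [MetricSpace Y] (f : X → Y) : Prop :=
  ∃ Λ c C : ℝ, 1 ≤ Λ ∧ 0 ≤ c ∧ 0 ≤ C ∧
    QIEmbed (fun a b : X => dist a b) (fun a b : Y => dist a b) f Λ c ∧
    ∀ y : Y, ∃ x : X, dist (f x) y ≤ C

/-!
A metric space without geodesics still has virtual ones: a point at prescribed distances from `x`
and `y` on a missing segment can be adjoined with the smallest distance function which the triangle
inequality allows, and the Gromov products seen from it satisfy the four-point inequality with the
same constant. This gives stability of quasigeodesics in any hyperbolic space. If a quasigeodesic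
misses the ball of radius `E` around a virtual point, the Gromov products of nearby points of the
path are at least `E - O(1)`. The path leaves and reenters the vicinity of the segment within a time
`O(E)`; bisecting that time `O(log E)` times loses only `δ` per bisection, whereas the endpoints
have product `0`. So `E ≤ O(1) + δ * O(log E)` is bounded, and quasigeodesics are quasirulers.

Conversely, quasigeodesic triangles are thin in the hyperbolic space, hence also in any space that
embeds in it quasi-isometrically. When sides are quasirulers, the distance from `w` to a side
`[x, y]` of a thin triangle is `(x|y)_w` up to a constant, and thinness of a triangle then becomes
the four-point inequality.
-/

/-! ### Gromov products -/

section GromovProduct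

variable {Y : Type*} [PseudoMetricSpace Y]

theorem gromov_dist_comm (w x y : Y) : gromov dist w x y = gromov dist w y x := by
  rw [gromov, gromov, dist_comm x y, add_comm]

theorem gromov_dist_nonneg (w x y : Y) : 0 ≤ gromov dist w x y := by
  unfold gromov
  linarith [dist_triangle_right x y w]

theorem gromov_dist_le_dist (w x y : Y) : gromov dist w x y ≤ dist w y := by
  unfold gromov
  linarith [dist_triangle x y w, dist_comm w y]

theorem gromov_dist_le_add_dist (p q x y : Y) :
    gromov dist p x y ≤ gromov dist q x y + dist p q := by
  unfold gromov
  linarith [dist_triangle_right x p q, dist_triangle_right y p q]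

theorem dist_le_gromov_add_gromov_add_gromov (w p x y : Y) :
    dist p w ≤ gromov dist w x y + gromov dist p x w + gromov dist p w y := by
  unfold gromov
  linarith [dist_triangle_right x y p, dist_comm w p, dist_comm w y]

theorem IsHyperbolicWith.dist_add_dist_le {δ : ℝ}
    (h : IsHyperbolicWith (dist : Y → Y → ℝ) δ) (p q r s : Y) :
    dist p q + dist r s ≤ max (dist p r + dist q s) (dist p s + dist q r) + 2 * δ := by
  have hsr := h s r p q
  simp only [gromov, dist_comm r p, dist_comm r q] at hsr
  grind

end GromovProduct

/-! ### Virtual points on segments -/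

section VirtualPoint

variable {Y : Type*} [PseudoMetricSpace Y] {δ : ℝ}

/-- The distance from `p` to a virtual point placed at distance `r` from `x` on a segment from `x`
to `y`; the space need not contain such a segment. It is the smallest value allowed by the
triangle inequality through `x` and through `y`. -/
def virtualDist (x y : Y) (r : ℝ) (p : Y) : ℝ :=
  max (dist x p - r) (dist y p - (dist x y - r))

/-- The Gromov product of `p` and `q` seen from a virtual point at distance `D u` from each
point `u` of the space. -/
def virtualGromov (D : Y → ℝ) (p q : Y) : ℝ :=
  (D p + D q - dist p q) / 2

/-- Every virtual point of the segment from `x` to `y` is within `M` of the set `s`. -/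
def CoversVirtualSegment (x y : Y) (s : Set Y) (M : ℝ) : Prop :=
  ∀ r ∈ Icc 0 (dist x y), ∃ p ∈ s, virtualDist x y r p ≤ M

/-- The distance from the virtual point at distance `r` from `x` to the set `s`. -/
def virtualInfDist (x y : Y) (s : Set Y) (r : ℝ) : ℝ :=
  ⨅ p : s, virtualDist x y r p

theorem virtualDist_symm (x y : Y) (r : ℝ) (p : Y) :
    virtualDist y x (dist y x - r) p = virtualDist x y r p := by
  simp only [virtualDist, sub_sub_cancel, dist_comm y x, max_comm]

theorem virtualDist_left {x y : Y} {r : ℝ} (hr : 0 ≤ r) : virtualDist x y r x = r := by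
  simp only [virtualDist, dist_self, dist_comm y x]
  grind

theorem virtualDist_right {x y : Y} {r : ℝ} (hr : r ≤ dist x y) :
    virtualDist x y r y = dist x y - r := by
  simp only [virtualDist, dist_self]
  grind

theorem virtualDist_le_add_dist (x y : Y) (r : ℝ) (p q : Y) :
    virtualDist x y r p ≤ virtualDist x y r q + dist p q := by
  simp only [virtualDist]
  grind [dist_triangle_right x p q, dist_triangle_right y p q]

theorem virtualDist_le_add_abs_sub (x y : Y) (r r' : ℝ) (p : Y) :
    virtualDist x y r p ≤ virtualDist x y r' p + |r - r'| := by
  simp only [virtualDist]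
  grind

theorem gromov_dist_le_virtualDist (x y : Y) (r : ℝ) (p : Y) :
    gromov dist p x y ≤ virtualDist x y r p := by
  simp only [gromov, virtualDist]
  grind

theorem virtualDist_nonneg (x y : Y) (r : ℝ) (p : Y) : 0 ≤ virtualDist x y r p :=
  (gromov_dist_nonneg p x y).trans (gromov_dist_le_virtualDist x y r p)

theorem virtualDist_gromov_dist (x y p : Y) :
    virtualDist x y (gromov dist x p y) p = gromov dist p x y := by
  simp only [virtualDist, gromov, dist_comm p, dist_comm y x]
  grind

theorem IsHyperbolicWith.dist_le_virtualDist_add_virtualDist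
    (h : IsHyperbolicWith (dist : Y → Y → ℝ) δ) (x y : Y) (r : ℝ) (p q : Y) :
    dist p q ≤ virtualDist x y r p + virtualDist x y r q + 2 * δ := by
  have hpq := h.dist_add_dist_le p q x y
  rw [dist_comm p x, dist_comm q y, dist_comm p y, dist_comm q x] at hpq
  simp only [virtualDist]
  grind

theorem IsHyperbolicWith.min_virtualGromov_sub_le_of_support
    (h : IsHyperbolicWith (dist : Y → Y → ℝ) δ) {D : Y → ℝ} {z q : Y} {e : ℝ}
    (hD : ∀ u, dist z u - e ≤ D u) (hq : D q = dist z q - e) (p s : Y) :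
    min (virtualGromov D p q) (virtualGromov D q s) - δ ≤ virtualGromov D p s := by
  have hps := h.dist_add_dist_le p s z q
  rw [dist_comm p z, dist_comm s q, dist_comm s z] at hps
  simp only [virtualGromov]
  grind [hD p, hD s]

theorem IsHyperbolicWith.min_virtualGromov_virtualDist_sub_le
    (h : IsHyperbolicWith (dist : Y → Y → ℝ) δ) (x y : Y) (r : ℝ) (p q s : Y) :
    min (virtualGromov (virtualDist x y r) p q) (virtualGromov (virtualDist x y r) q s) - δ ≤
      virtualGromov (virtualDist x y r) p s := by
  rcases max_choice (dist x q - r) (dist y q - (dist x y - r)) with hq | hq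
  · exact h.min_virtualGromov_sub_le_of_support (D := virtualDist x y r)
      (fun _ ↦ le_max_left _ _) hq p s
  · exact h.min_virtualGromov_sub_le_of_support (D := virtualDist x y r)
      (fun _ ↦ le_max_right _ _) hq p s

theorem CoversVirtualSegment.symm {x y : Y} {s : Set Y} {M : ℝ}
    (hs : CoversVirtualSegment x y s M) : CoversVirtualSegment y x s M := by
  rintro r ⟨hr₀, hr₁⟩
  rw [dist_comm] at hr₁
  obtain ⟨p, hp, hpM⟩ := hs (dist x y - r) ⟨by linarith, by linarith⟩
  exact ⟨p, hp, by rwa [virtualDist_symm] at hpM⟩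

/-- The virtual point closest to `p` is the one at distance `(p|y)_x` from `x`. -/
theorem IsHyperbolicWith.exists_dist_le_of_coversVirtualSegment
    (h : IsHyperbolicWith (dist : Y → Y → ℝ) δ) {x y : Y} {s : Set Y} {M : ℝ}
    (hs : CoversVirtualSegment x y s M) (p : Y) :
    ∃ q ∈ s, dist p q ≤ gromov dist p x y + M + 2 * δ := by
  obtain ⟨q, hq, hqM⟩ := hs _ ⟨gromov_dist_nonneg x p y, gromov_dist_le_dist x p y⟩
  have hpq := h.dist_le_virtualDist_add_virtualDist x y (gromov dist x p y) p q
  rw [virtualDist_gromov_dist] at hpq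
  exact ⟨q, hq, by linarith⟩

/-- The number `E` is the supremum over the virtual segment of the distance to `s`. -/
theorem exists_largest_hole {x y : Y} {s : Set Y} (hx : x ∈ s) :
    ∃ E, 0 ≤ E ∧ (∃ r ∈ Icc 0 (dist x y), ∀ p ∈ s, E - 1 ≤ virtualDist x y r p) ∧
      ∀ M, E < M → CoversVirtualSegment x y s M := by
  have : Nonempty s := ⟨⟨x, hx⟩⟩
  have infDist_le (r : ℝ) {p : Y} (hp : p ∈ s) : virtualInfDist x y s r ≤ virtualDist x y r p :=
    ciInf_le (f := fun p : s ↦ virtualDist x y r p)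
      ⟨0, by rintro _ ⟨p, rfl⟩; exact virtualDist_nonneg x y r p⟩ ⟨p, hp⟩
  have hbdd : BddAbove (virtualInfDist x y s '' Icc 0 (dist x y)) := by
    refine ⟨dist x y, ?_⟩
    rintro _ ⟨r, hr, rfl⟩
    exact (infDist_le r hx).trans ((virtualDist_left hr.1).trans_le hr.2)
  have le_sup {r : ℝ} (hr : r ∈ Icc 0 (dist x y)) :
      virtualInfDist x y s r ≤ sSup (virtualInfDist x y s '' Icc 0 (dist x y)) :=
    le_csSup hbdd (mem_image_of_mem _ hr)
  have hzero : (0 : ℝ) ∈ Icc 0 (dist x y) := left_mem_Icc.2 dist_nonneg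
  refine ⟨sSup (virtualInfDist x y s '' Icc 0 (dist x y)), ?_, ?_, fun M hM r hr ↦ ?_⟩
  · exact (Real.iInf_nonneg fun p : s ↦ virtualDist_nonneg x y 0 p).trans (le_sup hzero)
  · obtain ⟨_, ⟨r, hr, rfl⟩, hlt⟩ := exists_lt_of_lt_csSup (image_nonempty.2 ⟨0, hzero⟩)
      (sub_one_lt (sSup (virtualInfDist x y s '' Icc 0 (dist x y))))
    exact ⟨r, hr, fun p hp ↦ hlt.le.trans (infDist_le r hp)⟩
  · obtain ⟨p, hp⟩ := exists_lt_of_ciInf_lt ((le_sup hr).trans_lt hM)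
    exact ⟨p, p.2, hp.le⟩

/-- Where the segment enters the ball of radius `2 * E` around the virtual point, or at `x` when
the ball contains `x`. -/
theorem CoversVirtualSegment.exists_le_virtualGromov_left {x y : Y} {s : Set Y} {E r : ℝ}
    (hs : CoversVirtualSegment x y s (E + 1)) (hE : 0 ≤ E) (hx : x ∈ s)
    (hr : r ∈ Icc 0 (dist x y)) (hfar : ∀ p ∈ s, E - 1 ≤ virtualDist x y r p) :
    ∃ p ∈ s, E - 1 ≤ virtualGromov (virtualDist x y r) x p ∧ virtualDist x y r p ≤ 3 * E + 1 := by
  rcases le_total 0 (r - 2 * E) with hrE | hrE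
  · obtain ⟨p, hp, hpE⟩ := hs (r - 2 * E) ⟨hrE, by linarith [hr.2]⟩
    have hxp : dist x p - (r - 2 * E) ≤ virtualDist x y (r - 2 * E) p := le_max_left _ _
    have hrp := virtualDist_le_add_abs_sub x y r (r - 2 * E) p
    rw [sub_sub_cancel, abs_of_nonneg (by positivity)] at hrp
    refine ⟨p, hp, ?_, by linarith⟩
    rw [virtualGromov, virtualDist_left hr.1]
    linarith [hfar p hp]
  · have hxr := virtualDist_left (x := x) (y := y) hr.1
    refine ⟨x, hx, ?_, by linarith⟩
    rw [virtualGromov, dist_self]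
    linarith [hfar x hx]

theorem CoversVirtualSegment.exists_le_virtualGromov_right {x y : Y} {s : Set Y} {E r : ℝ}
    (hs : CoversVirtualSegment x y s (E + 1)) (hE : 0 ≤ E) (hy : y ∈ s)
    (hr : r ∈ Icc 0 (dist x y)) (hfar : ∀ p ∈ s, E - 1 ≤ virtualDist x y r p) :
    ∃ p ∈ s, E - 1 ≤ virtualGromov (virtualDist x y r) p y ∧ virtualDist x y r p ≤ 3 * E + 1 := by
  have hsymm : virtualDist y x (dist y x - r) = virtualDist x y r :=
    funext (virtualDist_symm x y r)
  obtain ⟨p, hp, hpy, hpE⟩ := hs.symm.exists_le_virtualGromov_left (r := dist y x - r) hE hy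
    (by rw [dist_comm]; exact ⟨sub_nonneg.2 hr.2, sub_le_self _ hr.1⟩) (by rwa [hsymm])
  rw [hsymm] at hpy hpE
  refine ⟨p, hp, ?_, hpE⟩
  rwa [virtualGromov, dist_comm, add_comm (virtualDist x y r p)]

end VirtualPoint

/-! ### Dyadic subdivision and connectedness -/

theorem sub_mul_le_of_abs_sub_le_two_pow {P : ℝ → ℝ → ℝ} {a b m δ : ℝ}
    (hP : ∀ s t u, min (P s t) (P t u) - δ ≤ P s u)
    (hm : ∀ s ∈ Icc a b, ∀ u ∈ Icc a b, |s - u| ≤ 1 → m ≤ P s u) (k : ℕ) :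
    ∀ s ∈ Icc a b, ∀ u ∈ Icc a b, |s - u| ≤ 2 ^ k → m - δ * k ≤ P s u := by
  induction k with
  | zero => simpa using hm
  | succ k ih =>
    intro s hs u hu hsu
    have hmid : midpoint ℝ s u ∈ Icc a b := (convex_Icc a b).midpoint_mem hs hu
    have hleft : |s - midpoint ℝ s u| ≤ 2 ^ k := by
      rw [← Real.dist_eq, dist_left_midpoint, Real.dist_eq, Real.norm_ofNat]
      linarith [pow_succ (2 : ℝ) k]
    have hright : |midpoint ℝ s u - u| ≤ 2 ^ k := by
      rw [← Real.dist_eq, dist_midpoint_right, Real.dist_eq, Real.norm_ofNat]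
      linarith [pow_succ (2 : ℝ) k]
    have hmin := le_min (ih s hs _ hmid hleft) (ih _ hmid u hu hright)
    push_cast
    linarith [hP s (midpoint ℝ s u) u]

theorem eventually_linear_le_two_pow (A B : ℝ) : ∀ᶠ k : ℕ in atTop, A * k + B ≤ 2 ^ k := by
  have hlin : (fun k : ℕ ↦ A * (k : ℝ) + B) =o[atTop] fun k : ℕ ↦ (2 : ℝ) ^ k :=
    ((isLittleO_coe_const_pow_of_one_lt one_lt_two).const_mul_left A).add
      (Asymptotics.isLittleO_const_left.2 <| Or.inr <|
        tendsto_norm_atTop_atTop.comp (tendsto_pow_atTop_atTop_of_one_lt one_lt_two))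
  filter_upwards [hlin.bound one_pos] with k hk
  simpa using (le_abs_self _).trans hk

theorem eventually_exists_linear_le_two_pow {A δ : ℝ} (B K : ℝ) (hA : 0 ≤ A) (hδ : 0 ≤ δ) :
    ∀ᶠ E : ℝ in atTop, ∃ k : ℕ, A * E + B ≤ 2 ^ k ∧ K + δ * k < E := by
  set C := 2 * (δ + 1)
  have hC₀ : 0 < C := by positivity
  have hfloor : Tendsto (fun E : ℝ ↦ ⌊E / C⌋₊) atTop atTop :=
    tendsto_nat_floor_atTop.comp (tendsto_id.atTop_div_const hC₀)
  filter_upwards [hfloor.eventually (eventually_linear_le_two_pow (A * C) (A * C + B)),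
    eventually_gt_atTop (2 * K), eventually_ge_atTop 0] with E hpow hK hE
  refine ⟨⌊E / C⌋₊, le_trans ?_ hpow, ?_⟩
  · have hlt : E ≤ (⌊E / C⌋₊ + 1) * C := (div_le_iff₀ hC₀).1 (Nat.lt_floor_add_one _).le
    linarith [mul_le_mul_of_nonneg_left hlt hA]
  · have hle : ⌊E / C⌋₊ * C ≤ E := (le_div_iff₀ hC₀).1 (Nat.floor_le (by positivity))
    have : (0 : ℝ) ≤ ⌊E / C⌋₊ := Nat.cast_nonneg _
    linarith

theorem exists_dist_lt_of_isPreconnected {α : Type*} [PseudoMetricSpace α] {s p q : Set α}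
    (hs : IsPreconnected s) (hcover : s ⊆ p ∪ q) (hp : (s ∩ p).Nonempty) (hq : (s ∩ q).Nonempty)
    {ε : ℝ} (hε : 0 < ε) : ∃ x ∈ s ∩ p, ∃ y ∈ s ∩ q, dist x y < ε := by
  have hsub (t : Set α) : t ⊆ thickening (ε / 2) t := self_subset_thickening (half_pos hε) t
  have hthick : s ⊆ thickening (ε / 2) (s ∩ p) ∪ thickening (ε / 2) (s ∩ q) := fun x hx ↦
    (hcover hx).imp (fun hxp ↦ hsub _ ⟨hx, hxp⟩) fun hxq ↦ hsub _ ⟨hx, hxq⟩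
  obtain ⟨z, -, hzp, hzq⟩ := hs _ _ isOpen_thickening isOpen_thickening hthick
    (hp.mono fun x hx ↦ ⟨hx.1, hsub _ hx⟩) (hq.mono fun x hx ↦ ⟨hx.1, hsub _ hx⟩)
  obtain ⟨x, hx, hzx⟩ := mem_thickening_iff.1 hzp
  obtain ⟨y, hy, hzy⟩ := mem_thickening_iff.1 hzq
  exact ⟨x, hx, y, hy, by linarith [dist_triangle_left x y z]⟩

/-! ### Quasigeodesics -/

section Quasigeodesic

variable {X Y : Type*} [MetricSpace X] [MetricSpace Y] {f g : ℝ → Y} {a b Λ c : ℝ}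

/-- The map `f` restricts to a `(Λ, c)`-quasigeodesic on `[a, b]` from `x` to `y`. -/
def IsQuasigeodesicPath (f : ℝ → Y) (a b Λ c : ℝ) (x y : Y) : Prop :=
  a ≤ b ∧ f a = x ∧ f b = y ∧ IsQuasigeodesicOn f a b Λ c

variable (Y) in
/-- The space is `(Λ, c)`-quasigeodesic. -/
def IsQuasigeodesicSpace (Λ c : ℝ) : Prop :=
  ∀ x y : Y, ∃ (a b : ℝ) (f : ℝ → Y), IsQuasigeodesicPath f a b Λ c x y

theorem IsGeodesicSpace.isQuasigeodesicSpace (hY : IsGeodesicSpace Y) :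
    IsQuasigeodesicSpace Y 1 0 := fun x y ↦ by
  obtain ⟨f, hx, hy, hf⟩ := hY x y
  exact ⟨0, dist x y, f, dist_nonneg, hx, hy, fun s hs t ht ↦ by simp [hf s hs t ht]⟩

theorem IsQuasigeodesicOn.mono {a' b' : ℝ} (hf : IsQuasigeodesicOn f a b Λ c) (ha : a ≤ a')
    (hb : b' ≤ b) : IsQuasigeodesicOn f a' b' Λ c :=
  fun s hs t ht ↦ hf s (Icc_subset_Icc ha hb hs) t (Icc_subset_Icc ha hb ht)

theorem IsQuasigeodesicOn.abs_sub_le (hf : IsQuasigeodesicOn f a b Λ c) (hΛ : 0 < Λ) {s t : ℝ}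
    (hs : s ∈ Icc a b) (ht : t ∈ Icc a b) : |s - t| ≤ Λ * (dist (f s) (f t) + c) := by
  rw [← div_le_iff₀' hΛ]
  linarith [(hf s hs t ht).1]

theorem IsQuasigeodesicOn.dist_le (hf : IsQuasigeodesicOn f a b Λ c) (hΛ : 0 ≤ Λ) {s t ℓ : ℝ}
    (hs : s ∈ Icc a b) (ht : t ∈ Icc a b) (hst : |s - t| ≤ ℓ) : dist (f s) (f t) ≤ Λ * ℓ + c := by
  linarith [(hf s hs t ht).2, mul_le_mul_of_nonneg_left hst hΛ]

theorem IsQuasigeodesicOn.of_dist_le {C : ℝ} (hf : IsQuasigeodesicOn f a b Λ c)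
    (hfg : ∀ t ∈ Icc a b, dist (f t) (g t) ≤ C) : IsQuasigeodesicOn g a b Λ (c + 2 * C) := by
  intro s hs t ht
  obtain ⟨hlower, hupper⟩ := hf s hs t ht
  have hdiff : |dist (f s) (f t) - dist (g s) (g t)| ≤ 2 * C := by
    rw [← Real.dist_eq]
    linarith [dist_dist_dist_le (f s) (f t) (g s) (g t), hfg s hs, hfg t ht]
  rw [abs_le] at hdiff
  constructor <;> linarith

theorem IsQuasigeodesicOn.prolong {ℓ : ℝ} (hf : IsQuasigeodesicOn f a b Λ c) (hΛ : 0 < Λ)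
    (hab : a ≤ b) (hℓ : 0 ≤ ℓ) :
    IsQuasigeodesicOn (fun t ↦ f (min t b)) a (b + ℓ) Λ (c + ℓ / Λ) := by
  intro s hs t ht
  have hmin {t : ℝ} (ht : t ∈ Icc a (b + ℓ)) : min t b ∈ Icc a b :=
    ⟨le_min ht.1 hab, min_le_right _ _⟩
  obtain ⟨hlower, hupper⟩ := hf _ (hmin hs) _ (hmin ht)
  have hle : |min s b - min t b| ≤ |s - t| := by grind
  have hge : |s - t| / Λ ≤ |min s b - min t b| / Λ + ℓ / Λ := by
    rw [← add_div]
    gcongr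
    grind
  have hdiv : 0 ≤ ℓ / Λ := by positivity
  constructor <;> linarith [mul_le_mul_of_nonneg_left hle hΛ.le]

theorem IsQuasigeodesicOn.comp_qiEmbed {f : ℝ → X} {φ : X → Y} {Λ' c' : ℝ} (hΛ' : 1 ≤ Λ')
    (hφ : QIEmbed dist dist φ Λ' c') (hf : IsQuasigeodesicOn f a b Λ c) :
    IsQuasigeodesicOn (φ ∘ f) a b (Λ' * Λ) (Λ' * c + c') := by
  intro s hs t ht
  obtain ⟨hlower, hupper⟩ := hf s hs t ht
  obtain ⟨hφ_lower, hφ_upper⟩ := hφ (f s) (f t)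
  have hΛ'₀ : 0 < Λ' := by linarith
  have hc : 0 ≤ c := by simpa using (hf s hs s hs).1
  constructor
  · have hdiv := div_le_div_of_nonneg_right hlower hΛ'₀.le
    rw [sub_div, div_div, mul_comm Λ] at hdiv
    have hc' : c / Λ' ≤ Λ' * c := (div_le_self hc hΛ').trans (le_mul_of_one_le_left hc hΛ')
    simp only [Function.comp_apply]
    linarith
  · simp only [Function.comp_apply]
    linarith [mul_le_mul_of_nonneg_left hupper hΛ'₀.le]

theorem IsQuasigeodesicPath.comp_qiEmbed {f : ℝ → X} {φ : X → Y} {Λ' c' : ℝ} {x y : X}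
    (hΛ' : 1 ≤ Λ') (hφ : QIEmbed dist dist φ Λ' c') (hf : IsQuasigeodesicPath f a b Λ c x y) :
    IsQuasigeodesicPath (φ ∘ f) a b (Λ' * Λ) (Λ' * c + c') (φ x) (φ y) :=
  ⟨hf.1, congrArg φ hf.2.1, congrArg φ hf.2.2.1, hf.2.2.2.comp_qiEmbed hΛ' hφ⟩

/-- The prolongation to `[a, b + 1]` separates the two ends, so that the path can be moved there
independently even when `a = b`. -/
theorem IsQuasigeodesicPath.exists_move_ends {x y x' y' : Y} {C : ℝ} (hΛ : 0 < Λ)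
    (hf : IsQuasigeodesicPath f a b Λ c x y) (hx : dist x x' ≤ C) (hy : dist y y' ≤ C) :
    ∃ g, IsQuasigeodesicPath g a (b + 1) Λ (c + 1 / Λ + 2 * C) x' y' := by
  obtain ⟨hab, rfl, rfl, hf⟩ := hf
  have hC : 0 ≤ C := dist_nonneg.trans hx
  refine ⟨fun t ↦ if t ≤ a then x' else if b + 1 ≤ t then y' else f (min t b), by linarith,
    if_pos le_rfl, by simp only [le_refl, if_true, if_neg (show ¬b + 1 ≤ a by linarith)],
    (hf.prolong hΛ hab zero_le_one).of_dist_le fun t ht ↦ ?_⟩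
  split_ifs with hta htb
  · rwa [hta.antisymm ht.1, min_eq_left hab]
  · rwa [min_eq_right (by linarith)]
  · rwa [dist_self]

theorem IsQuasigeodesicSpace.of_qiEmbed {φ : X → Y} {Λ' c' C : ℝ}
    (hX : IsQuasigeodesicSpace X Λ c) (hΛ : 0 < Λ) (hΛ' : 1 ≤ Λ')
    (hφ : QIEmbed dist dist φ Λ' c') (hsurj : ∀ y, ∃ x, dist (φ x) y ≤ C) :
    IsQuasigeodesicSpace Y (Λ' * Λ) (Λ' * c + c' + 1 / (Λ' * Λ) + 2 * C) := by
  intro y y'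
  obtain ⟨x, hx⟩ := hsurj y
  obtain ⟨x', hx'⟩ := hsurj y'
  obtain ⟨a, b, f, hf⟩ := hX x x'
  obtain ⟨g, hg⟩ := (hf.comp_qiEmbed hΛ' hφ).exists_move_ends (by positivity) hx hx'
  exact ⟨a, b + 1, g, hg⟩

theorem QIEmbed.of_coarse_rightInverse {φ : X → Y} {ψ : Y → X} {C : ℝ} (hΛ : 1 ≤ Λ)
    (hφ : QIEmbed dist dist φ Λ c) (hψ : ∀ y, dist (φ (ψ y)) y ≤ C) :
    QIEmbed dist dist ψ Λ (Λ * (c + 2 * C)) := by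
  intro y y'
  obtain ⟨hlower, hupper⟩ := hφ (ψ y) (ψ y')
  have hΛ₀ : 0 < Λ := by linarith
  have hc : 0 ≤ c := by simpa using (hφ (ψ y) (ψ y)).1
  have hC : 0 ≤ c + 2 * C := by linarith [dist_nonneg.trans (hψ y)]
  have hdiff : |dist (φ (ψ y)) (φ (ψ y')) - dist y y'| ≤ 2 * C := by
    rw [← Real.dist_eq]
    linarith [dist_dist_dist_le (φ (ψ y)) (φ (ψ y')) y y', hψ y, hψ y']
  rw [abs_le] at hdiff
  constructor
  · have hdiv : dist y y' / Λ ≤ dist (ψ y) (ψ y') + (c + 2 * C) / Λ := by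
      rw [div_le_iff₀ hΛ₀, add_mul, div_mul_cancel₀ _ hΛ₀.ne']
      linarith
    linarith [div_le_self hC hΛ, le_mul_of_one_le_left hC hΛ]
  · have hmul : dist (ψ y) (ψ y') ≤ (dist y y' + (c + 2 * C)) * Λ := by
      rw [← div_le_iff₀ hΛ₀]
      linarith
    linarith

theorem isQuasirulerOn_iff_gromov_dist_le {τ : ℝ} :
    IsQuasirulerOn f a b τ ↔ ∀ s t u, s ∈ Icc a b → t ∈ Icc a b → u ∈ Icc a b → s ≤ t → t ≤ u →
      gromov dist (f t) (f s) (f u) ≤ τ := by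
  simp only [IsQuasirulerOn, gromov, div_le_iff₀ (zero_lt_two' ℝ), sub_le_iff_le_add',
    dist_comm (f _) (f _), mul_comm τ]

end Quasigeodesic

/-! ### Stability of quasigeodesics -/

section Stability

variable {Y : Type*} [MetricSpace Y] {f : ℝ → Y} {a b δ Λ c : ℝ}

theorem IsQuasigeodesicOn.sub_mul_le_virtualGromov (hf : IsQuasigeodesicOn f a b Λ c) (hΛ : 0 ≤ Λ)
    {D : Y → ℝ} {m : ℝ}
    (hD : ∀ p q s, min (virtualGromov D p q) (virtualGromov D q s) - δ ≤ virtualGromov D p s)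
    (hm : ∀ p ∈ f '' Icc a b, m ≤ D p) {k : ℕ} {s u : ℝ} (hs : s ∈ Icc a b) (hu : u ∈ Icc a b)
    (hsu : |s - u| ≤ 2 ^ k) : m - (Λ + c) / 2 - δ * k ≤ virtualGromov D (f s) (f u) := by
  refine sub_mul_le_of_abs_sub_le_two_pow (P := fun s u ↦ virtualGromov D (f s) (f u))
    (fun s t u ↦ hD (f s) (f t) (f u)) (fun s hs u hu hsu ↦ ?_) k s hs u hu hsu
  unfold virtualGromov
  linarith [hm _ (mem_image_of_mem f hs), hm _ (mem_image_of_mem f hu), hf.dist_le hΛ hs hu hsu]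

/-- Join `f a`, `f t₁`, `f t₂`, `f b`, where `f t₁` and `f t₂` lie where the path comes within
reach of the virtual segment on either side of the hole. The Gromov products of consecutive points
are at least about `E` or `E - δ * k`, while that of `f a` and `f b` vanishes. -/
theorem IsHyperbolicWith.hole_radius_le (h : IsHyperbolicWith (dist : Y → Y → ℝ) δ)
    (hδ : 0 ≤ δ) (hΛ : 0 < Λ) (hab : a ≤ b) (hf : IsQuasigeodesicOn f a b Λ c) {E r : ℝ}
    (hE : 0 ≤ E) (hcover : CoversVirtualSegment (f a) (f b) (f '' Icc a b) (E + 1))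
    (hr : r ∈ Icc 0 (dist (f a) (f b)))
    (hfar : ∀ p ∈ f '' Icc a b, E - 1 ≤ virtualDist (f a) (f b) r p) {k : ℕ}
    (hk : 6 * Λ * E + Λ * (2 + 2 * δ + c) ≤ 2 ^ k) :
    E ≤ 1 + (Λ + c) / 2 + 2 * δ + δ * k := by
  set D := virtualDist (f a) (f b) r with hD
  have hD_hyp := h.min_virtualGromov_virtualDist_sub_le (f a) (f b) r
  rw [← hD] at hD_hyp
  obtain ⟨_, ⟨t₁, ht₁, rfl⟩, hleft, hD₁⟩ := hcover.exists_le_virtualGromov_left hE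
    (mem_image_of_mem f (left_mem_Icc.2 hab)) hr hfar
  obtain ⟨_, ⟨t₂, ht₂, rfl⟩, hright, hD₂⟩ := hcover.exists_le_virtualGromov_right hE
    (mem_image_of_mem f (right_mem_Icc.2 hab)) hr hfar
  rw [← hD] at hleft hright hD₁ hD₂
  have ht : |t₁ - t₂| ≤ 2 ^ k := by
    have hdist := h.dist_le_virtualDist_add_virtualDist (f a) (f b) r (f t₁) (f t₂)
    rw [← hD] at hdist
    refine ((hf.abs_sub_le hΛ ht₁ ht₂).trans ?_).trans hk
    linarith [mul_le_mul_of_nonneg_left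
      (show dist (f t₁) (f t₂) ≤ 6 * E + 2 + 2 * δ by linarith) hΛ.le]
  have hmiddle : E - 1 - (Λ + c) / 2 - δ * k ≤ virtualGromov D (f t₁) (f t₂) :=
    hf.sub_mul_le_virtualGromov hΛ.le hD_hyp hfar ht₁ ht₂ ht
  have hends : virtualGromov D (f a) (f b) = 0 := by
    rw [virtualGromov, hD, virtualDist_left hr.1, virtualDist_right hr.2]
    ring
  have hΛc : 0 ≤ Λ + c := by
    have hc : 0 ≤ c := by simpa using (hf _ ht₁ _ ht₁).1
    positivity
  have hδk : 0 ≤ δ * k := by positivity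
  have htail := (sub_le_sub_right (le_min hmiddle (by linarith)) δ).trans
    (hD_hyp (f t₁) (f t₂) (f b))
  have htotal := (sub_le_sub_right (le_min (by linarith) htail) δ).trans
    (hD_hyp (f a) (f t₁) (f b))
  linarith

theorem IsHyperbolicWith.exists_coversVirtualSegment (h : IsHyperbolicWith (dist : Y → Y → ℝ) δ)
    (hδ : 0 ≤ δ) (hΛ : 0 < Λ) (c : ℝ) :
    ∃ M, 0 ≤ M ∧ ∀ (f : ℝ → Y) (a b : ℝ), a ≤ b → IsQuasigeodesicOn f a b Λ c →
      CoversVirtualSegment (f a) (f b) (f '' Icc a b) M := by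
  obtain ⟨M, hM⟩ := eventually_atTop.1 <|
    (eventually_exists_linear_le_two_pow (A := 6 * Λ) (Λ * (2 + 2 * δ + c))
      (1 + (Λ + c) / 2 + 2 * δ) (by positivity) hδ)
  refine ⟨max M 0, le_max_right _ _, fun f a b hab hf ↦ ?_⟩
  obtain ⟨E, hE, ⟨r, hr, hfar⟩, hcover⟩ :=
    exists_largest_hole (y := f b) (mem_image_of_mem f (left_mem_Icc.2 hab))
  refine hcover _ (lt_max_of_lt_left ?_)
  by_contra! hME
  obtain ⟨k, hpow, hlt⟩ := hM E hME
  exact hlt.not_ge (h.hole_radius_le hδ hΛ hab hf hE (hcover _ (lt_add_one E)) hr hfar hpow)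

/-- The parts of the path before and after `t` together cover the connected virtual segment, so
some virtual point is close to both; these two points of the path are close in `Y`, hence in
time. -/
theorem IsHyperbolicWith.gromov_dist_le_of_coversVirtualSegment
    (h : IsHyperbolicWith (dist : Y → Y → ℝ) δ) (hΛ : 0 < Λ)
    (hf : IsQuasigeodesicOn f a b Λ c) {M : ℝ} (hM : 0 ≤ M)
    (hcover : CoversVirtualSegment (f a) (f b) (f '' Icc a b) M) {t : ℝ} (ht : t ∈ Icc a b) :
    gromov dist (f t) (f a) (f b) ≤ M + Λ * (Λ * (2 * M + 1 + 2 * δ + c)) + c := by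
  let near (I : Set ℝ) : Set ℝ := {r | ∃ v ∈ I, virtualDist (f a) (f b) r (f v) ≤ M}
  have hsplit : Icc 0 (dist (f a) (f b)) ⊆ near (Icc a t) ∪ near (Icc t b) := by
    intro r hr
    obtain ⟨_, ⟨v, hv, rfl⟩, hvM⟩ := hcover r hr
    exact (le_total v t).imp (fun hvt ↦ ⟨v, ⟨hv.1, hvt⟩, hvM⟩) fun htv ↦ ⟨v, ⟨htv, hv.2⟩, hvM⟩
  have hstart : 0 ∈ near (Icc a t) :=
    ⟨a, left_mem_Icc.2 ht.1, by rwa [virtualDist_left le_rfl]⟩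
  have hend : dist (f a) (f b) ∈ near (Icc t b) :=
    ⟨b, right_mem_Icc.2 ht.2, by rwa [virtualDist_right le_rfl, sub_self]⟩
  obtain ⟨r, ⟨-, v, hv, hvM⟩, r', ⟨-, v', hv', hvM'⟩, hrr'⟩ :=
    exists_dist_lt_of_isPreconnected isPreconnected_Icc hsplit
      ⟨0, left_mem_Icc.2 dist_nonneg, hstart⟩ ⟨_, right_mem_Icc.2 dist_nonneg, hend⟩ one_pos
  rw [Real.dist_eq] at hrr'
  have hv_mem : v ∈ Icc a b := ⟨hv.1, hv.2.trans ht.2⟩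
  have hv_mem' : v' ∈ Icc a b := ⟨ht.1.trans hv'.1, hv'.2⟩
  have hdist : dist (f v) (f v') ≤ 2 * M + 1 + 2 * δ := by
    linarith [h.dist_le_virtualDist_add_virtualDist (f a) (f b) r (f v) (f v'),
      virtualDist_le_add_abs_sub (f a) (f b) r r' (f v')]
  have htime : |t - v| ≤ Λ * (2 * M + 1 + 2 * δ + c) := calc
    |t - v| ≤ |v - v'| := by
      rw [abs_of_nonneg (sub_nonneg.2 hv.2), abs_sub_comm]
      linarith [le_abs_self (v' - v), hv'.1]
    _ ≤ Λ * (dist (f v) (f v') + c) := hf.abs_sub_le hΛ hv_mem hv_mem'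
    _ ≤ Λ * (2 * M + 1 + 2 * δ + c) := by gcongr
  linarith [gromov_dist_le_virtualDist (f a) (f b) r (f t),
    virtualDist_le_add_dist (f a) (f b) r (f t) (f v), hf.dist_le hΛ.le ht hv_mem htime]

theorem IsHyperbolicWith.exists_isQuasirulerOn (h : IsHyperbolicWith (dist : Y → Y → ℝ) δ)
    (hδ : 0 ≤ δ) (hΛ : 0 < Λ) (hc : 0 ≤ c) :
    ∃ τ, 0 ≤ τ ∧ ∀ (f : ℝ → Y) (a b : ℝ), IsQuasigeodesicOn f a b Λ c → IsQuasirulerOn f a b τ := by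
  obtain ⟨M, hM, hcover⟩ := h.exists_coversVirtualSegment hδ hΛ c
  refine ⟨M + Λ * (Λ * (2 * M + 1 + 2 * δ + c)) + c, by positivity, fun f a b hf ↦ ?_⟩
  refine isQuasirulerOn_iff_gromov_dist_le.2 fun s t u hs _ hu hst htu ↦ ?_
  have hf_su : IsQuasigeodesicOn f s u Λ c := hf.mono hs.1 hu.2
  exact h.gromov_dist_le_of_coversVirtualSegment hΛ hf_su hM
    (hcover f s u (hst.trans htu) hf_su) ⟨hst, htu⟩

theorem IsQuasirulerOn.gromov_dist_le {τ t : ℝ} (hf : IsQuasirulerOn f a b τ)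
    (ht : t ∈ Icc a b) : gromov dist (f t) (f a) (f b) ≤ τ :=
  have hab : a ≤ b := ht.1.trans ht.2
  isQuasirulerOn_iff_gromov_dist_le.1 hf a t b (left_mem_Icc.2 hab) ht (right_mem_Icc.2 hab)
    ht.1 ht.2

theorem HypSpace.quasiruled_of_isQuasigeodesicSpace (hY : HypSpace Y)
    (hqg : IsQuasigeodesicSpace Y Λ c) (hΛ : 1 ≤ Λ) (hc : 0 ≤ c) : Quasiruled Y := by
  obtain ⟨δ, hδ, h⟩ := hY
  obtain ⟨τ, hτ, hruler⟩ := h.exists_isQuasirulerOn hδ (by positivity) hc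
  exact ⟨Λ, c, τ, hΛ, hc, hτ, hqg, hruler⟩

end Stability

/-! ### Thin quasigeodesic triangles -/

section ThinTriangles

variable {X Y : Type*} [MetricSpace X] [MetricSpace Y] {δ Λ c τ H : ℝ}

variable (Y) in
/-- In every triangle with `(Λ, c)`-quasigeodesic sides, the side `f` from `x` to `y` lies in the
`H`-neighborhood of the union of the sides `g` and `h` through the third vertex `z`. -/
def HasThinTriangles (Λ c H : ℝ) : Prop :=
  ∀ (f g h : ℝ → Y) (a b a' b' a'' b'' : ℝ) (x y z : Y), IsQuasigeodesicPath f a b Λ c x y →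
    IsQuasigeodesicPath g a' b' Λ c x z → IsQuasigeodesicPath h a'' b'' Λ c z y →
    ∀ t ∈ Icc a b, (∃ s ∈ Icc a' b', dist (f t) (g s) ≤ H) ∨
      ∃ s ∈ Icc a'' b'', dist (f t) (h s) ≤ H

theorem IsHyperbolicWith.exists_hasThinTriangles (h : IsHyperbolicWith (dist : Y → Y → ℝ) δ)
    (hδ : 0 ≤ δ) (hΛ : 0 < Λ) (hc : 0 ≤ c) : ∃ H, 0 ≤ H ∧ HasThinTriangles Y Λ c H := by
  obtain ⟨M, hM, hcover⟩ := h.exists_coversVirtualSegment hδ hΛ c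
  obtain ⟨τ, hτ, hruler⟩ := h.exists_isQuasirulerOn hδ hΛ hc
  have exists_near {k : ℝ → Y} {a b : ℝ} {x y : Y} (hk : IsQuasigeodesicPath k a b Λ c x y) {p : Y}
      (hp : gromov dist p x y ≤ τ + δ) : ∃ s ∈ Icc a b, dist p (k s) ≤ τ + δ + M + 2 * δ := by
    obtain ⟨hab, rfl, rfl, hk⟩ := hk
    obtain ⟨_, ⟨s, hs, rfl⟩, hps⟩ :=
      h.exists_dist_le_of_coversVirtualSegment (hcover k a b hab hk) p
    exact ⟨s, hs, by linarith⟩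
  refine ⟨τ + δ + M + 2 * δ, by positivity, ?_⟩
  rintro f g k a b a' b' a'' b'' _ _ z ⟨-, rfl, rfl, hf⟩ hg hk t ht
  have hruler_t := (hruler f a b hf).gromov_dist_le ht
  have hmin : min (gromov dist (f t) (f a) z) (gromov dist (f t) z (f b)) ≤ τ + δ := by
    have := h (f t) z (f a) (f b)
    rw [gromov_dist_comm _ z] at this
    linarith
  exact (min_le_iff.1 hmin).imp (exists_near hg) (exists_near hk)

theorem HasThinTriangles.of_qiEmbed {φ : Y → X} {Λ' c' : ℝ}
    (hX : HasThinTriangles X (Λ' * Λ) (Λ' * c + c') H) (hΛ' : 1 ≤ Λ')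
    (hφ : QIEmbed dist dist φ Λ' c') : HasThinTriangles Y Λ c (Λ' * (H + c')) := by
  have pull {p q : Y} (hpq : dist (φ p) (φ q) ≤ H) : dist p q ≤ Λ' * (H + c') := by
    rw [← div_le_iff₀' (by positivity)]
    linarith [(hφ p q).1]
  intro f g h a b a' b' a'' b'' x y z hf hg hh t ht
  exact (hX _ _ _ a b a' b' a'' b'' _ _ _ (hf.comp_qiEmbed hΛ' hφ) (hg.comp_qiEmbed hΛ' hφ)
    (hh.comp_qiEmbed hΛ' hφ) t ht).imp (fun ⟨s, hs, hd⟩ ↦ ⟨s, hs, pull hd⟩)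
    fun ⟨s, hs, hd⟩ ↦ ⟨s, hs, pull hd⟩

/-- A point `p` of the side from `x` to `y` at which the triangle `x y w` switches from the side
towards `x` to the side towards `y` has small Gromov products `(x|w)_p` and `(w|y)_p`. -/
theorem HasThinTriangles.exists_dist_le_gromov_add (hthin : HasThinTriangles Y Λ c H)
    (hΛ : 0 ≤ Λ) (hH : 0 ≤ H) (hjoin : IsQuasigeodesicSpace Y Λ c)
    (hruler : ∀ (f : ℝ → Y) (a b : ℝ), IsQuasigeodesicOn f a b Λ c → IsQuasirulerOn f a b τ)
    {f : ℝ → Y} {a b : ℝ} {x y : Y} (hf : IsQuasigeodesicPath f a b Λ c x y) (w : Y) :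
    ∃ t ∈ Icc a b, dist (f t) w ≤ gromov dist w x y + (2 * τ + 2 * H + Λ + c) := by
  obtain ⟨a', b', g, hg⟩ := hjoin x w
  obtain ⟨a'', b'', h, hh⟩ := hjoin w y
  have hsides := hthin f g h a b a' b' a'' b'' x y w hf hg hh
  obtain ⟨hab, rfl, rfl, hf⟩ := hf
  obtain ⟨hab', hga, rfl, hg⟩ := hg
  obtain ⟨hab'', hha, hhb, hh⟩ := hh
  obtain ⟨t, ⟨ht, s, hs, hts⟩, t', ⟨ht', s', hs', hts'⟩, htt'⟩ :=
    exists_dist_lt_of_isPreconnected (p := {t | ∃ s ∈ Icc a' b', dist (f t) (g s) ≤ H})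
      (q := {t | ∃ s ∈ Icc a'' b'', dist (f t) (h s) ≤ H}) isPreconnected_Icc hsides
      ⟨a, left_mem_Icc.2 hab, a', left_mem_Icc.2 hab', by rwa [hga, dist_self]⟩
      ⟨b, right_mem_Icc.2 hab, b'', right_mem_Icc.2 hab'', by rwa [hhb, dist_self]⟩ one_pos
  have hleft := (hruler g a' b' hg).gromov_dist_le hs
  have hright := (hruler h a'' b'' hh).gromov_dist_le hs'
  rw [hga] at hleft
  rw [hha, hhb] at hright
  refine ⟨t, ht, ?_⟩
  linarith [dist_le_gromov_add_gromov_add_gromov (g b') (f t) (f a) (f b),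
    gromov_dist_le_add_dist (f t) (g s) (f a) (g b'),
    gromov_dist_le_add_dist (f t) (f t') (g b') (f b),
    gromov_dist_le_add_dist (f t') (h s') (g b') (f b), hf.dist_le hΛ ht ht' htt'.le]

theorem HasThinTriangles.hypSpace (hthin : HasThinTriangles Y Λ c H) (hΛ : 0 ≤ Λ) (hc : 0 ≤ c)
    (hτ : 0 ≤ τ) (hH : 0 ≤ H) (hjoin : IsQuasigeodesicSpace Y Λ c)
    (hruler : ∀ (f : ℝ → Y) (a b : ℝ), IsQuasigeodesicOn f a b Λ c → IsQuasirulerOn f a b τ) :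
    HypSpace Y := by
  refine ⟨2 * τ + 2 * H + Λ + c + H + τ, by positivity, fun w x y z ↦ ?_⟩
  have gromov_le {k : ℝ → Y} {a b : ℝ} {p q : Y} (hk : IsQuasigeodesicPath k a b Λ c p q) {s : ℝ}
      (hs : s ∈ Icc a b) (u : Y) : gromov dist w p q ≤ dist u w + dist u (k s) + τ := by
    obtain ⟨-, rfl, rfl, hk⟩ := hk
    linarith [gromov_dist_le_add_dist w (k s) (k a) (k b), (hruler k a b hk).gromov_dist_le hs,
      dist_triangle_left w (k s) u]
  obtain ⟨a, b, f, hf⟩ := hjoin y z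
  obtain ⟨a', b', g, hg⟩ := hjoin y x
  obtain ⟨a'', b'', h, hh⟩ := hjoin x z
  obtain ⟨t, ht, hle⟩ := hthin.exists_dist_le_gromov_add hΛ hH hjoin hruler hf w
  rw [sub_le_iff_le_add, min_le_iff]
  refine (hthin f g h a b a' b' a'' b'' y z x hf hg hh t ht).imp ?_ ?_
  · rintro ⟨s, hs, hd⟩
    rw [gromov_dist_comm w x y]
    linarith [gromov_le hg hs (f t)]
  · rintro ⟨s, hs, hd⟩
    linarith [gromov_le hh hs (f t)]

theorem Quasiruled.hypSpace_of_qiEmbed {φ : Y → X} {Λ' c' : ℝ} (hY : Quasiruled Y)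
    (hX : HypSpace X) (hφ : QIEmbed dist dist φ Λ' c') (hΛ' : 1 ≤ Λ') (hc' : 0 ≤ c') :
    HypSpace Y := by
  obtain ⟨Λ, c, τ, hΛ, hc, hτ, hjoin, hruler⟩ := hY
  obtain ⟨δ, hδ, h⟩ := hX
  obtain ⟨H, hH, hthin⟩ := h.exists_hasThinTriangles (Λ := Λ' * Λ) (c := Λ' * c + c') hδ
    (by positivity) (by positivity)
  exact (hthin.of_qiEmbed hΛ' hφ).hypSpace (by positivity) hc hτ (by positivity) hjoin hruler

end ThinTriangles

theorem hyperbolic_iff_quasiruled_general {X Y : Type*} [MetricSpace X] [MetricSpace Y] {Λ c : ℝ}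
    (hΛ : 1 ≤ Λ) (hc : 0 ≤ c) (hqg : IsQuasigeodesicSpace X Λ c) (hhyp : HypSpace X)
    (φ : X → Y) (hφ : MetricQI φ) : HypSpace Y ↔ Quasiruled Y := by
  obtain ⟨Λ', c', C, hΛ', hc', hC, hembed, hsurj⟩ := hφ
  constructor
  · intro hY
    exact hY.quasiruled_of_isQuasigeodesicSpace (hqg.of_qiEmbed (by positivity) hΛ' hembed hsurj)
      (one_le_mul_of_one_le_of_one_le hΛ' hΛ) (by positivity)
  · intro hY
    choose ψ hψ using hsurj
    have hadd : 0 ≤ Λ' * (c' + 2 * C) := by positivity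
    exact hY.hypSpace_of_qiEmbed hhyp (hembed.of_coarse_rightInverse hΛ' hψ) hΛ' hadd

/-- **Theorem 1.11.**  Let `X` be a geodesic Gromov hyperbolic metric space and
`φ : X → Y` a quasi-isometry onto a metric space `Y`.  Then `Y` is Gromov hyperbolic if
and only if `Y` is quasiruled. -/
theorem hyperbolic_iff_quasiruled
    {X Y : Type*} [MetricSpace X] [MetricSpace Y]
    (hgeo : IsGeodesicSpace X) (hhyp : HypSpace X)
    (φ : X → Y) (hφ : MetricQI φ) :
    HypSpace Y ↔ Quasiruled Y := by
  exact hyperbolic_iff_quasiruled_general le_rfl le_rfl hgeo.isQuasigeodesicSpace hhyp φ hφ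

end GHM
end
end

section
/- Let Γ be a non-elementary hyperbolic group with a fixed finite generating set S and associated word metric d_w, and let μ be a symmetric probability measure whose support generates Γ, with Green function G. Then the Green metric d_G is quasi-isometric to d_w and hyperbolic if and only if the following two conditions hold: (ED) there are positive constants C₁, c₁ such that G(e,γ) ≤ C₁ e^{−c₁ d_w(e,γ)} for all γ ∈ Γ; and (QR) for every r ≥ 0 there is a constant C(r) such that G(e,γ) ≤ C(r) G(e,γ') G(γ',γ) whenever γ,γ' ∈ Γ and γ' is at d_w-distance at most r from a d_w-geodesic segment between e and γ. -/
open Filter MeasureTheory Topology Metric Set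
open scoped ENNReal

noncomputable section

namespace GHM

variable {G : Type*} [Group G]

/-!
For a transient symmetric walk, `F(x,y) = G(x,y) / G(e,e)`, so `d_G = log G(e,e) - log G` is a
left-invariant pseudometric, and (ED) and (QR) are statements about `d_G`: a linear lower bound in
terms of `d_w`, and additivity up to a bounded error along word geodesics.

* Transience. Let `f` be the Green function of the walk stopped after `N` steps. Its translation
  energy `‖f (· g) - f‖²` is at most linear in `f(e)`. In a non-elementary hyperbolic group, a
  bi-infinite geodesic and a point far from it give a tripod, and the elements of the tripod and
  their products form a binary tree. Averages of `f` over the levels of this tree change by a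
  geometrically decreasing multiple of the square root of the energy, and they tend to `0`. Hence
  `f(e) ≤ C √f(e)`, so `f(e)` is bounded uniformly in `N`.
* Quasi-isometry. The bound `d_G ≤ Λ d_w` always holds. Balls of `d_G` are finite because `G` tends
  to `0` at infinity, so even a quasi-isometry other than the identity gives the linear lower bound.
* Hyperbolicity. If `d_G` is hyperbolic, word geodesics are quasigeodesics of `d_G`. Chaining Gromov
  products along them, with a total loss that does not depend on their length, shows that they are
  quasirulers, which is (QR). No geodesics of `d_G` are needed. Conversely, by (QR) bounded Gromov
  products for `d_w` are bounded for `d_G`, and the four point condition passes to `d_G`.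
-/

/-! ### Pseudometrics and Gromov products -/

section Pseudometric

variable {X : Type*} {d : X → X → ℝ} {δ : ℝ}

/-- `d` satisfies the axioms of a pseudometric, so that distinct points may be at distance `0`.
The Green metric is only used through these properties. -/
structure IsPseudometricFun (d : X → X → ℝ) : Prop where
  refl : ∀ x, d x x = 0
  symm : ∀ x y, d x y = d y x
  triangle : ∀ x y z, d x z ≤ d x y + d y z

lemma IsPseudometricFun.nonneg (hd : IsPseudometricFun d) (x y : X) : 0 ≤ d x y := by
  linarith [hd.triangle x y x, hd.refl x, hd.symm x y]

lemma IsPseudometricFun.eq_abs_sub_of_le (hd : IsPseudometricFun d) {n : ℕ} {p : ℕ → X}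
    (hle : ∀ i j, i ≤ j → j ≤ n → d (p i) (p j) ≤ j - i) (hn : n ≤ d (p 0) (p n))
    {i j : ℕ} (hi : i ≤ n) (hj : j ≤ n) : d (p i) (p j) = |(i : ℝ) - j| := by
  wlog hij : i ≤ j generalizing i j
  · rw [hd.symm, abs_sub_comm]
    exact this hj hi (le_of_not_ge hij)
  have hij' : (i : ℝ) ≤ j := by exact_mod_cast hij
  rw [abs_sub_comm, abs_of_nonneg (sub_nonneg.2 hij')]
  refine le_antisymm (hle i j hij hj) ?_
  have h0i := hle 0 i i.zero_le hi
  have hjn := hle j n hj le_rfl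
  push_cast at h0i
  linarith [hd.triangle (p 0) (p i) (p n), hd.triangle (p i) (p j) (p n)]

lemma gromov_comm (hd : IsPseudometricFun d) (w x y : X) : gromov d w x y = gromov d w y x := by
  unfold gromov
  rw [hd.symm x y]
  ring

lemma gromov_nonneg (hd : IsPseudometricFun d) (w x y : X) : 0 ≤ gromov d w x y := by
  unfold gromov
  linarith [hd.triangle x w y, hd.symm w y]

lemma gromov_le_left (hd : IsPseudometricFun d) (w x y : X) : gromov d w x y ≤ d w x := by
  unfold gromov
  linarith [hd.triangle y x w, hd.symm y x, hd.symm x w]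

lemma gromov_le_right (hd : IsPseudometricFun d) (w x y : X) : gromov d w x y ≤ d w y :=
  gromov_comm hd w x y ▸ gromov_le_left hd w y x

lemma IsHyperbolicWith.nonneg (h : IsHyperbolicWith d δ) (x : X) : 0 ≤ δ := by
  have hx := h x x x x
  rw [min_self] at hx
  linarith

lemma IsHyperbolicWith.four_point (h : IsHyperbolicWith d δ) (hd : IsPseudometricFun d)
    (x y z w : X) : d x z + d y w ≤ max (d x y + d z w) (d x w + d y z) + 2 * δ := by
  have hmin := h w y x z
  unfold gromov at hmin
  rcases min_le_iff.1 (sub_le_iff_le_add.1 hmin) with h' | h'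
  · linarith [le_max_left (d x y + d z w) (d x w + d y z), hd.symm x y]
  · linarith [le_max_right (d x y + d z w) (d x w + d y z)]

lemma IsHyperbolicWith.gromov_le_of_between (h : IsHyperbolicWith d δ)
    (hd : IsPseudometricFun d) {w x y q : X} (hq : d w q + d q x = d w x)
    (hle : d w q ≤ gromov d w x y) : gromov d q w y ≤ δ := by
  unfold gromov at hle ⊢
  rcases le_max_iff.1 (sub_le_iff_le_add.2 (h.four_point hd q w y x)) with h' | h' <;>
    linarith [hd.symm q w, hd.symm q y, hd.symm x w, hd.symm y w, hd.symm x y]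

lemma IsHyperbolicWith.gromov_le_sub_of_between (h : IsHyperbolicWith d δ)
    (hd : IsPseudometricFun d) {w x y q : X} (hq : d w q + d q x = d w x)
    (hle : d w q ≤ gromov d w x y) : gromov d q x y ≤ gromov d w x y - d w q + δ := by
  have hwy := h.gromov_le_of_between hd hq hle
  unfold gromov at hwy ⊢
  linarith [hd.symm q x, hd.symm x w, hd.symm y w]

lemma IsHyperbolicWith.dist_le_of_between (h : IsHyperbolicWith d δ)
    (hd : IsPseudometricFun d) {x y p : X} (hp : d x p + d p y = d x y) (q : X) :
    d q p ≤ gromov d q x y + |d x p - gromov d x q y| + 2 * δ := by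
  obtain ⟨h₁, h₂⟩ := abs_le.1 (le_refl |d x p - gromov d x q y|)
  unfold gromov at *
  rcases le_max_iff.1 (sub_le_iff_le_add.2 (h.four_point hd q x p y)) with h' | h' <;>
    linarith [hd.symm q x, hd.symm q y, hd.symm x y]

end Pseudometric

section LeftInvariant

variable {d : G → G → ℝ}

lemma LeftInvariant.dist_one_inv_mul (hd : LeftInvariant d) (x y : G) :
    d 1 (x⁻¹ * y) = d x y := by
  rw [← hd x 1, mul_one, mul_inv_cancel_left]

lemma LeftInvariant.dist_mul_right (hd : LeftInvariant d) (x y : G) :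
    d x (x * y) = d 1 y := by
  rw [← hd.dist_one_inv_mul, inv_mul_cancel_left]

lemma LeftInvariant.dist_one_inv (hd : LeftInvariant d) (hpm : IsPseudometricFun d) (x : G) :
    d 1 x⁻¹ = d 1 x := by
  rw [hpm.symm, ← hd.dist_one_inv_mul, inv_inv, mul_one]

lemma LeftInvariant.gromov_mul_left (hd : LeftInvariant d) (g w x y : G) :
    gromov d (g * w) (g * x) (g * y) = gromov d w x y := by
  simp only [gromov, hd g]

end LeftInvariant

/-! ### The word metric -/

section WordMetric

variable {S : Finset G}

lemma exists_list_prod_eq_of_closure_eq_top {A : Set G} (hA : Subgroup.closure A = ⊤) (g : G) :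
    ∃ l : List G, (∀ a ∈ l, a ∈ A ∨ a⁻¹ ∈ A) ∧ l.prod = g := by
  have hg : g ∈ (Subgroup.closure A).toSubmonoid := hA ▸ Subgroup.mem_top g
  rw [Subgroup.closure_toSubmonoid] at hg
  exact Submonoid.exists_list_of_mem_closure hg

lemma wordLength_prod_le {l : List G} (hl : ∀ a ∈ l, a ∈ S ∨ a⁻¹ ∈ S) :
    wordLength S l.prod ≤ l.length :=
  Nat.sInf_le ⟨l, rfl, hl, rfl⟩

lemma exists_list_length_eq_wordLength (hS : Generates S) (g : G) :
    ∃ l : List G, l.length = wordLength S g ∧ (∀ a ∈ l, a ∈ S ∨ a⁻¹ ∈ S) ∧ l.prod = g := by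
  obtain ⟨l, hl, hprod⟩ := exists_list_prod_eq_of_closure_eq_top hS g
  exact Nat.sInf_mem (s := {n | ∃ l : List G, l.length = n ∧ _ ∧ l.prod = g})
    ⟨l.length, l, rfl, hl, hprod⟩

lemma wordLength_one : wordLength S (1 : G) = 0 :=
  Nat.le_zero.1 (wordLength_prod_le (S := S) (l := []) (by simp))

lemma wordLength_mul_le (hS : Generates S) (g h : G) :
    wordLength S (g * h) ≤ wordLength S g + wordLength S h := by
  obtain ⟨l, hl, hlS, rfl⟩ := exists_list_length_eq_wordLength hS g
  obtain ⟨k, hk, hkS, rfl⟩ := exists_list_length_eq_wordLength hS h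
  rw [← hl, ← hk, ← List.prod_append, ← List.length_append]
  exact wordLength_prod_le fun a ha => (List.mem_append.1 ha).elim (hlS a) (hkS a)

lemma wordLength_inv_le (hS : Generates S) (g : G) : wordLength S g⁻¹ ≤ wordLength S g := by
  obtain ⟨l, hl, hlS, rfl⟩ := exists_list_length_eq_wordLength hS g
  have hinv : ∀ a ∈ (l.map (·⁻¹)).reverse, a ∈ S ∨ a⁻¹ ∈ S := by
    intro a ha
    have := hlS a⁻¹ (by simpa using ha)
    rwa [inv_inv, or_comm] at this
  simpa [List.prod_inv_reverse, hl] using wordLength_prod_le hinv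

lemma wordLength_inv (hS : Generates S) (g : G) : wordLength S g⁻¹ = wordLength S g :=
  le_antisymm (wordLength_inv_le hS g) (by simpa using wordLength_inv_le hS g⁻¹)

lemma wordDist_one_left (g : G) : wordDist S 1 g = wordLength S g := by
  simp [wordDist]

lemma wordDist_isPseudometricFun (hS : Generates S) : IsPseudometricFun (wordDist S) where
  refl x := by simp [wordDist, wordLength_one]
  symm x y := by rw [wordDist, wordDist, ← wordLength_inv hS, mul_inv_rev, inv_inv]
  triangle x y z := by
    have h := wordLength_mul_le hS (x⁻¹ * y) (y⁻¹ * z)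
    rw [mul_assoc, mul_inv_cancel_left] at h
    unfold wordDist
    exact_mod_cast h

lemma wordDist_leftInvariant : LeftInvariant (wordDist S) := fun g x y => by
  rw [wordDist, wordDist, mul_inv_rev, mul_assoc, inv_mul_cancel_left]

lemma finite_setOf_wordLength_le (hS : Generates S) (n : ℕ) :
    {g : G | wordLength S g ≤ n}.Finite := by
  let T : Set G := S ∪ (S : Set G)⁻¹
  have : Finite T := (S.finite_toSet.union S.finite_toSet.inv).to_subtype
  refine ((List.finite_length_le T n).image fun l => (l.map Subtype.val).prod).subset ?_
  intro g hg
  obtain ⟨l, hl, hlS, hprod⟩ := exists_list_length_eq_wordLength hS g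
  lift l to List T using hlS
  exact ⟨l, by simpa using hl.trans_le hg, hprod⟩

lemma exists_le_wordLength [Infinite G] (hS : Generates S) (n : ℕ) :
    ∃ g : G, n ≤ wordLength S g := by
  by_contra! h
  exact Set.infinite_univ ((finite_setOf_wordLength_le hS n).subset fun g _ => (h g).le)

lemma exists_isWordGeodesic (hS : Generates S) (x y : G) :
    ∃ p : ℕ → G, IsWordGeodesic S (wordLength S (x⁻¹ * y)) p ∧ p 0 = x ∧
      p (wordLength S (x⁻¹ * y)) = y := by
  obtain ⟨l, hl, hlS, hprod⟩ := exists_list_length_eq_wordLength hS (x⁻¹ * y)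
  let p : ℕ → G := fun i => x * (l.take i).prod
  have hp₀ : p 0 = x := by simp [p]
  have hpn : p (wordLength S (x⁻¹ * y)) = y := by simp [p, ← hl, hprod]
  have hle : ∀ i j, i ≤ j → j ≤ wordLength S (x⁻¹ * y) → wordDist S (p i) (p j) ≤ j - i := by
    intro i j hij _
    obtain ⟨k, rfl⟩ := Nat.exists_eq_add_of_le hij
    have hsub : (p i)⁻¹ * p (i + k) = ((l.drop i).take k).prod := by
      simp only [p, List.take_add, List.prod_append]
      group
    have hk := wordLength_prod_le (S := S) (l := (l.drop i).take k) fun a ha =>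
      hlS a (List.mem_of_mem_drop (List.mem_of_mem_take ha))
    rw [wordDist, hsub, Nat.cast_add, add_sub_cancel_left]
    exact_mod_cast hk.trans (List.length_take_le _ _)
  refine ⟨p, fun i j => (wordDist_isPseudometricFun hS).eq_abs_sub_of_le hle ?_, hp₀, hpn⟩
  rw [hp₀, hpn, wordDist]

lemma exists_nearWordGeodesic_dist_eq_floor (hS : Generates S) (x y : G) {t : ℝ}
    (ht : t ≤ wordDist S x y) :
    ∃ q, NearWordGeodesic S x y q 0 ∧ wordDist S x q = ⌊t⌋₊ ∧
      wordDist S x q + wordDist S q y = wordDist S x y := by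
  obtain ⟨p, hp, hp₀, hpn⟩ := exists_isWordGeodesic hS x y
  have hi : ⌊t⌋₊ ≤ wordLength S (x⁻¹ * y) := Nat.floor_le_of_le ht
  have hxq : wordDist S x (p ⌊t⌋₊) = ⌊t⌋₊ := by simpa [hp₀] using hp 0 ⌊t⌋₊ (Nat.zero_le _) hi
  refine ⟨p ⌊t⌋₊, ⟨_, p, hp, hp₀, hpn, _, hi, ((wordDist_isPseudometricFun hS).refl _).le⟩,
    hxq, ?_⟩
  have hqy := hp ⌊t⌋₊ _ hi le_rfl
  rw [hpn, abs_sub_comm, abs_of_nonneg (sub_nonneg.2 (Nat.cast_le.2 hi))] at hqy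
  rw [hxq, hqy, add_sub_cancel, wordDist]

lemma NearWordGeodesic.of_wordDist_le (hS : Generates S) {x y u v : G} {r s : ℝ}
    (hv : NearWordGeodesic S x y v r) (huv : wordDist S u v ≤ s) :
    NearWordGeodesic S x y u (s + r) := by
  obtain ⟨n, p, hp, hp₀, hpn, i, hi, hvi⟩ := hv
  exact ⟨n, p, hp, hp₀, hpn, i, hi,
    ((wordDist_isPseudometricFun hS).triangle u v (p i)).trans (add_le_add huv hvi)⟩

end WordMetric

/-! ### Lines and tripods -/

lemma exists_forall_finset_frequently_eq {ι α β : Type*} {l : Filter β} [l.NeBot]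
    {P : β → ι → α} {A : ι → Set α} (hA : ∀ i, (A i).Finite)
    (hP : ∀ i, ∀ᶠ n in l, P n i ∈ A i) :
    ∃ p : ι → α, ∀ s : Finset ι, ∃ᶠ n in l, ∀ i ∈ s, P n i = p i := by
  let U : Ultrafilter β := Ultrafilter.of l
  have hlim : ∀ i, ∃ a ∈ A i, ∀ᶠ n in (U : Filter β), P n i = a := fun i =>
    (Ultrafilter.eventually_exists_mem_iff (hA i)).1
      ((hP i).filter_mono (Ultrafilter.of_le l) |>.mono fun _ hn => ⟨_, hn, rfl⟩)
  choose p _ hp using hlim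
  exact ⟨p, fun s => ((Finset.eventually_all s).2 fun i _ => hp i).frequently.filter_mono
    (Ultrafilter.of_le l)⟩

section Tripod

variable {S : Finset G} {δ : ℝ}

/-- `p` is a bi-infinite geodesic for the word metric of `S`. -/
def IsWordGeodesicLine (S : Finset G) (p : ℤ → G) : Prop :=
  ∀ i j : ℤ, wordDist S (p i) (p j) = intDist i j

lemma exists_isWordGeodesic_centered [Infinite G] (hS : Generates S) (n : ℕ) :
    ∃ p : ℤ → G, p 0 = 1 ∧
      ∀ i j : ℤ, i.natAbs ≤ n → j.natAbs ≤ n → wordDist S (p i) (p j) = intDist i j := by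
  obtain ⟨g, hg⟩ := exists_le_wordLength hS (2 * n)
  obtain ⟨q, hq, -, -⟩ := exists_isWordGeodesic hS 1 g
  rw [inv_one, one_mul] at hq
  have hcast : ∀ i : ℤ, i.natAbs ≤ n → (((n + i).toNat : ℕ) : ℝ) = n + i := by
    intro i hi
    rw [← Int.cast_natCast, Int.toNat_of_nonneg (by omega)]
    push_cast
    rfl
  refine ⟨fun i => (q n)⁻¹ * q (n + i).toNat, by simp, fun i j hi hj => ?_⟩
  rw [wordDist_leftInvariant, hq _ _ (by omega) (by omega),
    hcast i hi, hcast j hj, add_sub_add_left_eq_sub, intDist]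

lemma exists_isWordGeodesicLine [Infinite G] (hS : Generates S) :
    ∃ p : ℤ → G, IsWordGeodesicLine S p := by
  choose P hP₀ hP using exists_isWordGeodesic_centered hS
  have hball : ∀ i : ℤ, ∀ᶠ n in atTop, P n i ∈ {g : G | wordLength S g ≤ i.natAbs} := by
    intro i
    filter_upwards [eventually_ge_atTop i.natAbs] with n hn
    have hdist := hP n 0 i (by simp) hn
    rw [hP₀, wordDist_one_left, intDist, Int.cast_zero, zero_sub, abs_neg,
      ← Int.cast_abs, Int.abs_eq_natAbs, Int.cast_natCast] at hdist
    exact (Nat.cast_injective hdist).le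
  obtain ⟨p, hp⟩ := exists_forall_finset_frequently_eq
    (fun i : ℤ => finite_setOf_wordLength_le hS i.natAbs) hball
  refine ⟨p, fun i j => ?_⟩
  obtain ⟨n, heq, hn⟩ :=
    ((hp {i, j}).and_eventually (eventually_ge_atTop (max i.natAbs j.natAbs))).exists
  rw [← heq i (by simp), ← heq j (by simp)]
  exact hP n i j (by omega) (by omega)

lemma IsWordGeodesicLine.exists_le_wordDist {p : ℤ → G} (hp : IsWordGeodesicLine S p)
    (hS : Generates S) (hqi : ¬ QuasiIsometric (wordDist S) intDist) (D : ℕ) :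
    ∃ x : G, ∀ i, (D : ℝ) ≤ wordDist S x (p i) := by
  by_contra! hnear
  choose f hf using hnear
  have hd := wordDist_isPseudometricFun hS
  refine hqi ⟨f, 1, 2 * D, D, le_rfl, by positivity, by positivity, fun x y => ?_, fun n => ?_⟩
  · rw [← hp, div_one, one_mul]
    constructor <;>
      linarith [hf x, hf y, hd.symm x (p (f x)), hd.symm y (p (f y)),
        hd.triangle x (p (f x)) y, hd.triangle (p (f x)) (p (f y)) y,
        hd.triangle (p (f x)) x (p (f y)), hd.triangle x y (p (f y))]
  · exact ⟨p n, by rw [← hp, hd.symm]; exact (hf _).le⟩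

lemma exists_forall_wordDist_le {ι : Type*} [Nonempty ι] (x : G) (p : ι → G) :
    ∃ i, ∀ j, wordDist S x (p i) ≤ wordDist S x (p j) :=
  ⟨Function.argmin fun j => wordLength S (x⁻¹ * p j),
    fun j => Nat.cast_le.2 (Function.argmin_le (fun j => wordLength S (x⁻¹ * p j)) j)⟩

lemma gromov_le_of_forall_wordDist_le (hS : Generates S) (hyp : IsHyperbolicWith (wordDist S) δ)
    {n : ℕ} {p : ℕ → G} (hp : IsWordGeodesic S n p) {y : G}
    (hy : ∀ s ≤ n, wordDist S y (p 0) ≤ wordDist S y (p s)) :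
    gromov (wordDist S) (p 0) (p n) y ≤ 2 * δ + 1 := by
  have hd := wordDist_isPseudometricFun hS
  set t := gromov (wordDist S) (p 0) (p n) y
  have hdist : ∀ s ≤ n, wordDist S (p 0) (p s) = s := fun s hs => by
    simpa using hp 0 s n.zero_le hs
  have htn : ⌊t⌋₊ ≤ n :=
    Nat.floor_le_of_le ((gromov_le_left hd _ _ _).trans_eq (hdist n le_rfl))
  have hbetween : wordDist S (p 0) (p ⌊t⌋₊) + wordDist S (p ⌊t⌋₊) (p n)
      = wordDist S (p 0) (p n) := by
    rw [hdist _ htn, hdist n le_rfl, hp _ n htn le_rfl, abs_sub_comm,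
      abs_of_nonneg (sub_nonneg.2 (Nat.cast_le.2 htn)), add_sub_cancel]
  have hproj := hyp.gromov_le_of_between hd (y := y) hbetween
    ((hdist _ htn).trans_le (Nat.floor_le (gromov_nonneg hd _ _ _)))
  unfold gromov at hproj
  linarith [hy _ htn, hdist _ htn, Nat.lt_floor_add_one t, hd.symm (p 0) (p ⌊t⌋₊),
    hd.symm y (p 0)]

lemma IsWordGeodesicLine.isWordGeodesic_add {p : ℤ → G} (hp : IsWordGeodesicLine S p)
    (i : ℤ) (n : ℕ) : IsWordGeodesic S n fun s => p (i + s) := by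
  intro s t _ _
  simp [hp _ _, intDist]

lemma IsWordGeodesicLine.isWordGeodesic_sub {p : ℤ → G} (hp : IsWordGeodesicLine S p)
    (i : ℤ) (n : ℕ) : IsWordGeodesic S n fun s => p (i - s) := by
  intro s t _ _
  simp [hp _ _, intDist, abs_sub_comm]

/-- The three points `v` are at distance `D` from `1`, in directions whose pairwise Gromov products
are at most `C`. -/
structure IsTripod (d : G → G → ℝ) (D C : ℝ) (v : Fin 3 → G) : Prop where
  dist_eq : ∀ i, d 1 (v i) = D
  gromov_le : ∀ i j, i ≠ j → gromov d 1 (v i) (v j) ≤ C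

lemma LeftInvariant.isTripod {d : G → G → ℝ} (hd : LeftInvariant d) (hpm : IsPseudometricFun d)
    {D C : ℝ} {q x y z : G} (hx : d q x = D) (hy : d q y = D) (hz : d q z = D)
    (hxy : gromov d q x y ≤ C) (hxz : gromov d q x z ≤ C) (hyz : gromov d q y z ≤ C) :
    IsTripod d D C fun i => q⁻¹ * ![x, y, z] i where
  dist_eq i := by
    rw [hd.dist_one_inv_mul]
    fin_cases i
    exacts [hx, hy, hz]
  gromov_le i j hij := by
    rw [← inv_mul_cancel q, hd.gromov_mul_left]
    fin_cases i <;> fin_cases j <;>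
      first
      | exact absurd rfl hij
      | assumption
      | (rw [gromov_comm hpm]; assumption)

/-- The three points are taken on a bi-infinite geodesic, on both sides of the projection `q` of a
far point `x` to that line, and on a segment from `q` to `x`. -/
lemma exists_isTripod [Infinite G] (hS : Generates S)
    (hqi : ¬ QuasiIsometric (wordDist S) intDist)
    (hyp : IsHyperbolicWith (wordDist S) δ) (D : ℕ) :
    ∃ v, IsTripod (wordDist S) D (2 * δ + 1) v := by
  have hd := wordDist_isPseudometricFun hS
  have hδ := hyp.nonneg 1
  obtain ⟨p, hp⟩ := exists_isWordGeodesicLine hS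
  obtain ⟨x, hx⟩ := hp.exists_le_wordDist hS hqi D
  obtain ⟨i, hi⟩ := exists_forall_wordDist_le (S := S) x p
  obtain ⟨y, -, hpy, hbetween⟩ :=
    exists_nearWordGeodesic_dist_eq_floor hS (p i) x ((hx i).trans_eq (hd.symm _ _))
  rw [Nat.floor_natCast] at hpy
  have hnear : ∀ j, wordDist S y (p i) ≤ wordDist S y (p j) := fun j => by
    linarith [hi j, hd.triangle x y (p j), hd.symm x y, hd.symm x (p i), hd.symm y (p i)]
  have hright := gromov_le_of_forall_wordDist_le hS hyp (hp.isWordGeodesic_add i D)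
    (y := y) fun s _ => by simpa using hnear _
  have hleft := gromov_le_of_forall_wordDist_le hS hyp (hp.isWordGeodesic_sub i D)
    (y := y) fun s _ => by simpa using hnear _
  rw [Nat.cast_zero, add_zero] at hright
  rw [Nat.cast_zero, sub_zero] at hleft
  have hdr : wordDist S (p i) (p (i + D)) = D := by simp [hp _ _, intDist]
  have hdl : wordDist S (p i) (p (i - D)) = D := by simp [hp _ _, intDist]
  have hlr : gromov (wordDist S) (p i) (p (i - D)) (p (i + D)) = 0 := by
    rw [gromov, hd.symm _ (p i), hd.symm _ (p i), hdr, hdl, hp, intDist, abs_sub_comm,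
      abs_of_nonneg] <;> push_cast <;> linarith [D.cast_nonneg (α := ℝ)]
  exact ⟨_, wordDist_leftInvariant.isTripod hd hdl hdr hpy (by rw [hlr]; positivity) hleft hright⟩

end Tripod

/-! ### Binary trees in groups -/

section BinaryTree

/-- A binary tree in a group rooted at `1`: the vertices `X n` at level `n` are distinct, and each
vertex is obtained from its parent by right multiplication by one of the steps `t`. -/
structure IsBinaryTree {ι : Type*} (t : ι → G) (X : ∀ n : ℕ, (Fin n → Bool) → G) : Prop where
  injective : ∀ n, Function.Injective (X n)
  root : ∀ ω, X 0 ω = 1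
  exists_step : ∀ n ω, ∃ j, X (n + 1) ω = X n (Fin.init ω) * t j

/-- The endpoint of the path that starts at `1`, in state `i`, and reads a list of labels: the label
`b` changes the state `i` to `next i b`, and entering a state `j` multiplies on the right by
`t j`. -/
def stepEndpoint {ι β : Type*} (t : ι → G) (next : ι → β → ι) : ι → List β → G
  | _, [] => 1
  | i, b :: ω => t (next i b) * stepEndpoint t next (next i b) ω

lemma exists_stepEndpoint_append_singleton {ι β : Type*} (t : ι → G) (next : ι → β → ι) (b : β)
    (ω : List β) (i : ι) :
    ∃ j, stepEndpoint t next i (ω ++ [b]) = stepEndpoint t next i ω * t j := by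
  induction ω generalizing i with
  | nil => exact ⟨next i b, by simp [stepEndpoint]⟩
  | cons c ω ih =>
    obtain ⟨j, hj⟩ := ih (next i c)
    exact ⟨j, by simp [stepEndpoint, hj, mul_assoc]⟩

variable {d : G → G → ℝ} {δ D C : ℝ} {t : Fin 3 → G} {next : Fin 3 → Bool → Fin 3}

lemma LeftInvariant.gromov_mul_add_gromov_inv (hd : LeftInvariant d) (hpm : IsPseudometricFun d)
    (s z : G) : gromov d 1 s (s * z) + gromov d 1 s⁻¹ z = d 1 s := by
  have h := hd.gromov_mul_left s 1 s⁻¹ z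
  rw [mul_one, mul_inv_cancel] at h
  rw [← h]
  unfold gromov
  linarith [hpm.symm s 1, hpm.symm (s * z) 1, hpm.symm (s * z) s]

lemma IsTripod.exists_injective_gromov_le (ht : IsTripod d D C t) (hyp : IsHyperbolicWith d δ)
    (x : G) :
    ∃ c : Bool → Fin 3, Function.Injective c ∧ ∀ b, gromov d 1 x (t (c b)) ≤ C + δ := by
  have hor : ∀ j k, j ≠ k → gromov d 1 x (t j) ≤ C + δ ∨ gromov d 1 x (t k) ≤ C + δ := by
    intro j k hjk
    rw [← min_le_iff]
    linarith [hyp 1 x (t j) (t k), ht.gromov_le j k hjk]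
  obtain ⟨j, k, hjk, hj, hk⟩ : ∃ j k, j ≠ k ∧
      gromov d 1 x (t j) ≤ C + δ ∧ gromov d 1 x (t k) ≤ C + δ := by
    by_cases h0 : gromov d 1 x (t 0) ≤ C + δ
    · rcases hor 1 2 (by decide) with h | h
      exacts [⟨0, 1, by decide, h0, h⟩, ⟨0, 2, by decide, h0, h⟩]
    · exact ⟨1, 2, by decide, (hor 0 1 (by decide)).resolve_left h0,
        (hor 0 2 (by decide)).resolve_left h0⟩
  refine ⟨fun b => bif b then j else k, ?_, fun b => by cases b <;> assumption⟩
  intro a b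
  cases a <;> cases b <;> simp [hjk, hjk.symm]

lemma IsTripod.gromov_inv_stepEndpoint_le (ht : IsTripod d D C t) (hd : LeftInvariant d)
    (hpm : IsPseudometricFun d) (hyp : IsHyperbolicWith d δ) (hD : 2 * C + 4 * δ < D)
    (hnext : ∀ i b, gromov d 1 (t i)⁻¹ (t (next i b)) ≤ C + δ) (ω : List Bool) (i : Fin 3) :
    gromov d 1 (t i)⁻¹ (stepEndpoint t next i ω) ≤ C + 2 * δ := by
  have hδ := hyp.nonneg 1
  have hC : 0 ≤ C := (gromov_nonneg hpm _ _ _).trans (ht.gromov_le 0 1 (by decide))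
  induction ω generalizing i with
  | nil =>
    rw [stepEndpoint]
    linarith [gromov_le_right hpm 1 (t i)⁻¹ 1, hpm.refl 1]
  | cons b ω ih =>
    rw [stepEndpoint]
    have hmul := hd.gromov_mul_add_gromov_inv hpm (t (next i b))
      (stepEndpoint t next (next i b) ω)
    rw [ht.dist_eq] at hmul
    have hmin := (hyp 1 (t (next i b) * stepEndpoint t next (next i b) ω) (t i)⁻¹
      (t (next i b))).trans (hnext i b)
    rw [gromov_comm hpm 1 _ (t i)⁻¹, gromov_comm hpm 1 _ (t (next i b))] at hmin
    rcases min_le_iff.1 (sub_le_iff_le_add.1 hmin) with h | h <;> linarith [ih (next i b)]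

lemma IsTripod.le_gromov_stepEndpoint_cons (ht : IsTripod d D C t) (hd : LeftInvariant d)
    (hpm : IsPseudometricFun d) (hyp : IsHyperbolicWith d δ) (hD : 2 * C + 4 * δ < D)
    (hnext : ∀ i b, gromov d 1 (t i)⁻¹ (t (next i b)) ≤ C + δ) (i : Fin 3) (b : Bool)
    (ω : List Bool) :
    D - (C + 2 * δ) ≤ gromov d 1 (t (next i b)) (stepEndpoint t next i (b :: ω)) := by
  rw [stepEndpoint]
  linarith [hd.gromov_mul_add_gromov_inv hpm (t (next i b)) (stepEndpoint t next (next i b) ω),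
    ht.dist_eq (next i b), ht.gromov_inv_stepEndpoint_le hd hpm hyp hD hnext ω (next i b)]

lemma IsTripod.eq_of_stepEndpoint_eq (ht : IsTripod d D C t) (hd : LeftInvariant d)
    (hpm : IsPseudometricFun d) (hyp : IsHyperbolicWith d δ) (hD : 2 * C + 4 * δ < D)
    (hnext : ∀ i b, gromov d 1 (t i)⁻¹ (t (next i b)) ≤ C + δ)
    (hinj : ∀ i, Function.Injective (next i)) {ω ω' : List Bool} (hlen : ω.length = ω'.length)
    (i : Fin 3) (heq : stepEndpoint t next i ω = stepEndpoint t next i ω') : ω = ω' := by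
  induction ω generalizing ω' i with
  | nil => exact (List.length_eq_zero_iff.1 hlen.symm).symm
  | cons b ω ih =>
    obtain ⟨b', ω', rfl⟩ := List.exists_cons_of_length_eq_add_one hlen.symm
    obtain rfl | hb := eq_or_ne b b'
    · rw [stepEndpoint, stepEndpoint, mul_right_inj] at heq
      rw [ih (by simpa using hlen) _ heq]
    · have hle := ht.le_gromov_stepEndpoint_cons hd hpm hyp hD hnext i b ω
      have hle' := ht.le_gromov_stepEndpoint_cons hd hpm hyp hD hnext i b' ω'
      rw [← heq, gromov_comm hpm] at hle'
      rw [gromov_comm hpm] at hle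
      linarith [le_min hle hle', ht.gromov_le _ _ fun h => hb (hinj i h), hyp.nonneg 1,
        hyp 1 (stepEndpoint t next i (b :: ω)) (t (next i b)) (t (next i b')),
        (gromov_nonneg hpm _ _ _).trans (ht.gromov_le 0 1 (by decide))]

lemma IsTripod.exists_isBinaryTree (ht : IsTripod d D C t) (hd : LeftInvariant d)
    (hpm : IsPseudometricFun d) (hyp : IsHyperbolicWith d δ) (hD : 2 * C + 4 * δ < D) :
    ∃ X, IsBinaryTree t X := by
  choose next hinj hnext using fun i => ht.exists_injective_gromov_le hyp (t i)⁻¹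
  refine ⟨fun n ω => stepEndpoint t next 0 (List.ofFn ω), fun n ω ω' heq => ?_, fun ω => ?_,
    fun n ω => ?_⟩
  · exact List.ofFn_injective
      (ht.eq_of_stepEndpoint_eq hd hpm hyp hD hnext hinj (by simp) 0 heq)
  · rw [List.ofFn_zero, stepEndpoint]
  · rw [List.ofFn_succ', List.concat_eq_append]
    exact exists_stepEndpoint_append_singleton t next _ _ 0

end BinaryTree

lemma NonElemHyperbolic.exists_isBinaryTree (hG : NonElemHyperbolic G) :
    ∃ (t : Fin 3 → G) (X : ∀ n : ℕ, (Fin n → Bool) → G), IsBinaryTree t X := by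
  obtain ⟨hinf, ⟨S, hS⟩, h⟩ := hG
  obtain ⟨⟨δ, -, hyp⟩, hqi⟩ := h S hS
  obtain ⟨D, hD⟩ := exists_nat_gt (2 * (2 * δ + 1) + 4 * δ)
  obtain ⟨t, ht⟩ := exists_isTripod hS hqi hyp D
  exact ⟨t, ht.exists_isBinaryTree wordDist_leftInvariant (wordDist_isPseudometricFun hS) hyp hD⟩

/-! ### Convolution powers -/

section ConvPow

open scoped Classical in
/-- Convolution powers of an `ℝ≥0∞`-valued density. They agree with `convPow` for probability
densities, and their sums can be interchanged without any summability condition. -/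
def ennConvPow (m : G → ℝ≥0∞) : ℕ → G → ℝ≥0∞
  | 0 => fun g => if g = 1 then 1 else 0
  | n + 1 => fun g => ∑' y : G, ennConvPow m n y * m (y⁻¹ * g)

lemma ennConvPow_succ (m : G → ℝ≥0∞) (n : ℕ) (g : G) :
    ennConvPow m (n + 1) g = ∑' y : G, ennConvPow m n y * m (y⁻¹ * g) := rfl

lemma ennConvPow_one (m : G → ℝ≥0∞) (g : G) : ennConvPow m 1 g = m g := by
  rw [ennConvPow_succ, tsum_eq_single 1]
  · simp [ennConvPow]
  · intro y hy
    simp [ennConvPow, hy]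

lemma ennConvPow_add (m : G → ℝ≥0∞) (k n : ℕ) (g : G) :
    ennConvPow m (k + n) g = ∑' y : G, ennConvPow m k y * ennConvPow m n (y⁻¹ * g) := by
  induction n generalizing g with
  | zero =>
    rw [tsum_eq_single g]
    · simp [ennConvPow]
    · intro y hy
      simp [ennConvPow, inv_mul_eq_one, hy]
  | succ n ih =>
    rw [← add_assoc, ennConvPow_succ]
    simp_rw [ih, ← ENNReal.tsum_mul_right]
    rw [ENNReal.tsum_comm]
    refine tsum_congr fun y => ?_
    rw [ennConvPow_succ, ← ENNReal.tsum_mul_left, ← (Equiv.mulLeft y).tsum_eq]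
    refine tsum_congr fun z => ?_
    simp only [Equiv.coe_mulLeft, inv_mul_cancel_left, mul_inv_rev, mul_assoc]

lemma ennConvPow_inv {m : G → ℝ≥0∞} (hm : ∀ g, m g⁻¹ = m g) (n : ℕ) (g : G) :
    ennConvPow m n g⁻¹ = ennConvPow m n g := by
  induction n generalizing g with
  | zero => by_cases hg : g = 1 <;> simp [ennConvPow, hg]
  | succ n ih =>
    calc ennConvPow m (n + 1) g⁻¹ = ∑' y : G, ennConvPow m 1 (g * y) * ennConvPow m n y⁻¹ := by
          refine tsum_congr fun y => ?_
          rw [ennConvPow_one, ih, ← hm (g * y), mul_inv_rev, mul_comm]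
      _ = ∑' y : G, ennConvPow m 1 y * ennConvPow m n (y⁻¹ * g) := by
          rw [← (Equiv.mulLeft g).tsum_eq fun y => ennConvPow m 1 y * ennConvPow m n (y⁻¹ * g)]
          simp only [Equiv.coe_mulLeft, mul_inv_rev, inv_mul_cancel_right]
      _ = ennConvPow m (n + 1) g := by rw [← ennConvPow_add, add_comm]

lemma tsum_ennConvPow {m : G → ℝ≥0∞} (hm : ∑' g, m g = 1) (n : ℕ) :
    ∑' g, ennConvPow m n g = 1 := by
  induction n with
  | zero =>
    rw [tsum_eq_single 1]
    · simp [ennConvPow]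
    · intro y hy
      simp [ennConvPow, hy]
  | succ n ih =>
    simp_rw [ennConvPow_succ]
    rw [ENNReal.tsum_comm, ← ih]
    refine tsum_congr fun y => ?_
    rw [ENNReal.tsum_mul_left, ← (Equiv.mulLeft y).tsum_eq]
    simp [hm]

variable {μ : G → ℝ}

lemma IsProbDensity.tsum_ofReal {α : Type*} {p : α → ℝ} (hp : IsProbDensity p) :
    ∑' a, ENNReal.ofReal (p a) = 1 := by
  rw [← ENNReal.ofReal_tsum_of_nonneg hp.1 hp.2.summable, hp.2.tsum_eq, ENNReal.ofReal_one]

lemma IsProbDensity.ennConvPow_ne_top (hp : IsProbDensity μ) (n : ℕ) (g : G) :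
    ennConvPow (fun g => ENNReal.ofReal (μ g)) n g ≠ ∞ :=
  ENNReal.ne_top_of_tsum_ne_top
    ((tsum_ennConvPow hp.tsum_ofReal n).trans_ne ENNReal.one_ne_top) g

lemma IsProbDensity.convPow_eq_toReal (hp : IsProbDensity μ) (n : ℕ) (g : G) :
    convPow μ n g = (ennConvPow (fun g => ENNReal.ofReal (μ g)) n g).toReal := by
  induction n generalizing g with
  | zero =>
    simp only [convPow, ennConvPow]
    split_ifs <;> simp
  | succ n ih =>
    simp only [convPow, ennConvPow]
    rw [ENNReal.tsum_toReal_eq fun y =>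
      ENNReal.mul_ne_top (hp.ennConvPow_ne_top n y) ENNReal.ofReal_ne_top]
    refine tsum_congr fun y => ?_
    rw [ih, ENNReal.toReal_mul, ENNReal.toReal_ofReal (hp.1 _)]

lemma IsProbDensity.convPow_nonneg (hp : IsProbDensity μ) (n : ℕ) (g : G) :
    0 ≤ convPow μ n g := by
  rw [hp.convPow_eq_toReal]
  exact ENNReal.toReal_nonneg

lemma IsProbDensity.convPow_one (hp : IsProbDensity μ) (g : G) : convPow μ 1 g = μ g := by
  rw [hp.convPow_eq_toReal, ennConvPow_one, ENNReal.toReal_ofReal (hp.1 g)]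

lemma IsProbDensity.hasSum_convPow (hp : IsProbDensity μ) (n : ℕ) :
    HasSum (convPow μ n) 1 := by
  have hsum := tsum_ennConvPow hp.tsum_ofReal n
  have h := ENNReal.hasSum_toReal (hsum.trans_ne ENNReal.one_ne_top)
  rw [← ENNReal.tsum_toReal_eq (hp.ennConvPow_ne_top n), hsum, ENNReal.toReal_one] at h
  rwa [funext (hp.convPow_eq_toReal n)]

lemma IsProbDensity.hasSum_convPow_mul (hp : IsProbDensity μ) (k n : ℕ) (g : G) :
    HasSum (fun y => convPow μ k y * convPow μ n (y⁻¹ * g)) (convPow μ (k + n) g) := by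
  have hadd := ennConvPow_add (fun g => ENNReal.ofReal (μ g)) k n g
  have hfin := hp.ennConvPow_ne_top (k + n) g
  rw [hadd] at hfin
  have h := ENNReal.hasSum_toReal hfin
  rw [← ENNReal.tsum_toReal_eq (ENNReal.ne_top_of_tsum_ne_top hfin), ← hadd,
    ← hp.convPow_eq_toReal] at h
  simpa only [ENNReal.toReal_mul, ← hp.convPow_eq_toReal] using h

lemma IsSymmetric.convPow_inv (hs : IsSymmetric μ) (hp : IsProbDensity μ) (n : ℕ) (g : G) :
    convPow μ n g⁻¹ = convPow μ n g := by
  rw [hp.convPow_eq_toReal, hp.convPow_eq_toReal, ennConvPow_inv fun g => by rw [hs g]]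

lemma IsSymmetric.hasSum_convPow_mul_convPow (hs : IsSymmetric μ) (hp : IsProbDensity μ)
    (j k : ℕ) (g : G) :
    HasSum (fun x => convPow μ j x * convPow μ k (x * g)) (convPow μ (j + k) g) := by
  rw [← (Equiv.inv G).hasSum_iff]
  convert hp.hasSum_convPow_mul j k g using 2 with x
  simp [hs.convPow_inv hp]

end ConvPow

/-! ### Translation energy and transience -/

section TranslationEnergy

/-- The squared `ℓ²`-distance between `f` and its right translate by `g`. -/
def translationEnergy (f : G → ℝ) (g : G) : ℝ := ∑' x : G, (f (x * g) - f x) ^ 2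

variable {f : G → ℝ}

lemma translationEnergy_nonneg (f : G → ℝ) (g : G) : 0 ≤ translationEnergy f g :=
  tsum_nonneg fun _ => sq_nonneg _

lemma translationEnergy_one (f : G → ℝ) : translationEnergy f 1 = 0 := by
  simp [translationEnergy]

lemma translationEnergy_inv (f : G → ℝ) (g : G) :
    translationEnergy f g⁻¹ = translationEnergy f g := by
  rw [translationEnergy, ← (Equiv.mulRight g).tsum_eq]
  simp only [Equiv.coe_mulRight, mul_inv_cancel_right, translationEnergy, sub_sq_comm]

lemma hasSum_comp_mul_right {a : ℝ} (hf : HasSum f a) (g : G) :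
    HasSum (fun x => f (x * g)) a :=
  (Equiv.mulRight g).hasSum_iff.2 hf

lemma summable_mul_comp_mul_right (hf : Summable fun x => f x ^ 2) (g : G) :
    Summable fun x => f x * f (x * g) :=
  .of_norm_bounded (hf.add (hasSum_comp_mul_right hf.hasSum g).summable) fun x => by
    rw [Real.norm_eq_abs, abs_le]
    constructor <;>
      nlinarith [sq_nonneg (f x + f (x * g)), sq_nonneg (f x - f (x * g))]

lemma hasSum_translationEnergy (hf : Summable fun x => f x ^ 2) (g : G) :
    HasSum (fun x => (f (x * g) - f x) ^ 2) (translationEnergy f g) := by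
  refine Summable.hasSum ?_
  refine (((hasSum_comp_mul_right hf.hasSum g).summable.add hf).sub
    ((summable_mul_comp_mul_right hf g).mul_left 2)).congr fun x => ?_
  ring

lemma translationEnergy_eq (hf : Summable fun x => f x ^ 2) (g : G) :
    translationEnergy f g = 2 * (∑' x, f x ^ 2 - ∑' x, f x * f (x * g)) := by
  have h := ((hasSum_comp_mul_right hf.hasSum g).add hf.hasSum).sub
    ((summable_mul_comp_mul_right hf g).hasSum.mul_left 2)
  rw [(hasSum_translationEnergy hf g).unique (h.congr_fun fun x => by ring)]
  ring

lemma translationEnergy_mul_le (hf : Summable fun x => f x ^ 2) (g h : G) :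
    translationEnergy f (g * h) ≤ 2 * translationEnergy f g + 2 * translationEnergy f h := by
  have hh := hasSum_comp_mul_right (hasSum_translationEnergy hf h) g
  refine hasSum_le (fun x => ?_) (hasSum_translationEnergy hf (g * h))
    (((hasSum_translationEnergy hf g).mul_left 2).add (hh.mul_left 2))
  rw [← mul_assoc]
  nlinarith [sq_nonneg ((f (x * g * h) - f (x * g)) - (f (x * g) - f x))]

lemma exists_translationEnergy_le_of_closure_eq_top {A : Set G} (hA : Subgroup.closure A = ⊤)
    {ι : Type*} {F : ι → G → ℝ} {b : ι → ℝ} (hF : ∀ i, Summable fun x => F i x ^ 2)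
    (hb : ∀ a ∈ A, ∃ K : ℝ, 0 ≤ K ∧ ∀ i, translationEnergy (F i) a ≤ K * b i) (g : G) :
    ∃ K : ℝ, 0 ≤ K ∧ ∀ i, translationEnergy (F i) g ≤ K * b i := by
  have hg : g ∈ Subgroup.closure A := hA ▸ Subgroup.mem_top g
  induction hg using Subgroup.closure_induction with
  | mem a ha => exact hb a ha
  | one => exact ⟨0, le_rfl, fun i => by rw [translationEnergy_one, zero_mul]⟩
  | mul x y _ _ hx hy =>
    obtain ⟨K, hK0, hK⟩ := hx
    obtain ⟨L, hL0, hL⟩ := hy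
    exact ⟨2 * K + 2 * L, by positivity, fun i => by
      linarith [translationEnergy_mul_le (hF i) x y, hK i, hL i]⟩
  | inv x _ hx => simpa only [translationEnergy_inv] using hx

end TranslationEnergy

section LevelAverage

lemma sum_abs_comp_le_sqrt_card_mul {α κ : Type*} [Fintype κ] {u : α → ℝ}
    (hu : Summable fun a => u a ^ 2) {X : κ → α} (hX : Function.Injective X) :
    ∑ k, |u (X k)| ≤ √(Fintype.card κ) * √(∑' a, u a ^ 2) := by
  rw [← Real.sqrt_mul (Nat.cast_nonneg _)]
  refine Real.le_sqrt_of_sq_le (sq_sum_le_card_mul_sum_sq.trans ?_)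
  simp only [sq_abs, Finset.card_univ]
  gcongr
  rw [← tsum_fintype (L := .unconditional κ)]
  exact tsum_comp_le_tsum_of_inj hu (fun a => sq_nonneg (u a)) hX

lemma sum_comp_init {β M : Type*} [Fintype β] [AddCommMonoid M] {n : ℕ}
    (h : (Fin n → β) → M) :
    ∑ ω : Fin (n + 1) → β, h (Fin.init ω) = Fintype.card β • ∑ ω, h ω := by
  rw [← (Fin.snocEquiv fun _ : Fin (n + 1) => β).sum_comp, Fintype.sum_prod_type]
  simp [Fin.snocEquiv]

/-- The average of `f` over the vertices at level `n` of the binary tree `X`. -/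
def levelAverage (f : G → ℝ) (X : ∀ n : ℕ, (Fin n → Bool) → G) (n : ℕ) : ℝ :=
  (∑ ω, f (X n ω)) / 2 ^ n

lemma sqrt_two_pow_div (n : ℕ) : √(2 ^ n) / 2 ^ n = (√2)⁻¹ ^ n := by
  have h : √(2 ^ n) = √2 ^ n := by
    rw [← Real.sqrt_sq (pow_nonneg (Real.sqrt_nonneg 2) n), ← pow_mul, mul_comm n, pow_mul,
      Real.sq_sqrt zero_le_two]
  rw [Real.sqrt_div_self, h, inv_pow]

variable {ι : Type*} {t : ι → G} {X : ∀ n : ℕ, (Fin n → Bool) → G} {f : G → ℝ}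

lemma IsBinaryTree.levelAverage_zero (hX : IsBinaryTree t X) (f : G → ℝ) :
    levelAverage f X 0 = f 1 := by
  simp [levelAverage, hX.root]

lemma IsBinaryTree.levelAverage_le (hX : IsBinaryTree t X) (hf : Summable fun x => f x ^ 2)
    (n : ℕ) : levelAverage f X n ≤ √(∑' x, f x ^ 2) * (√2)⁻¹ ^ n := by
  have h := (Finset.sum_le_sum fun ω _ => le_abs_self (f (X n ω))).trans
    (sum_abs_comp_le_sqrt_card_mul hf (hX.injective n))
  rw [Fintype.card_fun, Fintype.card_bool, Fintype.card_fin, Nat.cast_pow, Nat.cast_two] at h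
  rw [levelAverage, ← sqrt_two_pow_div, mul_div_assoc', mul_comm]
  gcongr

variable [Fintype ι]

lemma IsBinaryTree.sum_parent_sub_le (hX : IsBinaryTree t X) (hf : Summable fun x => f x ^ 2)
    (n : ℕ) :
    ∑ ω : Fin (n + 1) → Bool, (f (X n (Fin.init ω)) - f (X (n + 1) ω)) ≤
      2 * (√(2 ^ n) * ∑ j, √(translationEnergy f (t j))) := by
  calc ∑ ω : Fin (n + 1) → Bool, (f (X n (Fin.init ω)) - f (X (n + 1) ω))
      ≤ ∑ ω : Fin (n + 1) → Bool, ∑ j,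
          |f (X n (Fin.init ω) * t j) - f (X n (Fin.init ω))| := by
        refine Finset.sum_le_sum fun ω _ => ?_
        obtain ⟨j, hj⟩ := hX.exists_step n ω
        rw [hj]
        refine (le_abs_self _).trans ?_
        rw [abs_sub_comm]
        exact Finset.single_le_sum
          (f := fun j => |f (X n (Fin.init ω) * t j) - f (X n (Fin.init ω))|)
          (fun j _ => abs_nonneg _) (Finset.mem_univ j)
    _ = 2 * ∑ j, ∑ ω : Fin n → Bool, |f (X n ω * t j) - f (X n ω)| := by
        rw [sum_comp_init fun ω => ∑ j, |f (X n ω * t j) - f (X n ω)|, Finset.sum_comm,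
          Fintype.card_bool, nsmul_eq_mul, Nat.cast_two]
    _ ≤ 2 * (√(2 ^ n) * ∑ j, √(translationEnergy f (t j))) := by
        have h (j : ι) := sum_abs_comp_le_sqrt_card_mul (hasSum_translationEnergy hf (t j)).summable
          (hX.injective n)
        simp only [Fintype.card_fun, Fintype.card_bool, Fintype.card_fin, Nat.cast_pow,
          Nat.cast_two] at h
        exact mul_le_mul_of_nonneg_left ((Finset.sum_le_sum fun j _ => h j).trans_eq
          (Finset.mul_sum _ _ _).symm) zero_le_two

lemma IsBinaryTree.levelAverage_sub_le (hX : IsBinaryTree t X) (hf : Summable fun x => f x ^ 2)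
    (n : ℕ) :
    levelAverage f X n - levelAverage f X (n + 1) ≤
      (∑ j, √(translationEnergy f (t j))) * (√2)⁻¹ ^ n := by
  have h := hX.sum_parent_sub_le hf n
  rw [Finset.sum_sub_distrib, sum_comp_init fun ω => f (X n ω), Fintype.card_bool,
    nsmul_eq_mul, Nat.cast_two] at h
  rw [← sqrt_two_pow_div, levelAverage, levelAverage, pow_succ]
  field_simp
  linarith

lemma IsBinaryTree.apply_one_le (hX : IsBinaryTree t X) (hf : Summable fun x => f x ^ 2) :
    f 1 ≤ (∑ j, √(translationEnergy f (t j))) * (1 - (√2)⁻¹)⁻¹ := by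
  have hr0 : 0 ≤ (√2)⁻¹ := by positivity
  have hr1 : (√2)⁻¹ < 1 := inv_lt_one_of_one_lt₀ Real.one_lt_sqrt_two
  set B := ∑ j, √(translationEnergy f (t j))
  have hB : 0 ≤ B := Finset.sum_nonneg fun j _ => Real.sqrt_nonneg _
  have htelescope (n : ℕ) : f 1 ≤ levelAverage f X n + B * (1 - (√2)⁻¹)⁻¹ := by
    have hsum := Finset.sum_le_sum fun k (_ : k ∈ Finset.range n) => hX.levelAverage_sub_le hf k
    rw [Finset.sum_range_sub', hX.levelAverage_zero, ← Finset.mul_sum] at hsum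
    have hgeom : ∑ k ∈ Finset.range n, (√2)⁻¹ ^ k ≤ (1 - (√2)⁻¹)⁻¹ := by
      rw [← tsum_geometric_of_lt_one hr0 hr1]
      exact (summable_geometric_of_lt_one hr0 hr1).sum_le_tsum _ fun k _ => by positivity
    linarith [mul_le_mul_of_nonneg_left hgeom hB]
  have hlim : Tendsto (fun n : ℕ => √(∑' x, f x ^ 2) * (√2)⁻¹ ^ n + B * (1 - (√2)⁻¹)⁻¹) atTop
      (𝓝 (√(∑' x, f x ^ 2) * 0 + B * (1 - (√2)⁻¹)⁻¹)) :=
    ((tendsto_pow_atTop_nhds_zero_of_lt_one hr0 hr1).const_mul _).add_const _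
  rw [mul_zero, zero_add] at hlim
  exact ge_of_tendsto' hlim fun n =>
    (htelescope n).trans (add_le_add_left (hX.levelAverage_le hf n) _)

end LevelAverage

section Transience

/-- The Green function truncated to the first `N` steps of the walk. -/
def truncGreen (μ : G → ℝ) (N : ℕ) (x : G) : ℝ := ∑ k ∈ Finset.range N, convPow μ k x

/-- The autocorrelation `g ↦ ∑ x, f x * f (x * g)` of `f = truncGreen μ N`, for symmetric `μ`. -/
def truncGreenAutocorr (μ : G → ℝ) (N : ℕ) (g : G) : ℝ :=
  ∑ j ∈ Finset.range N, ∑ k ∈ Finset.range N, convPow μ (j + k) g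

variable {μ : G → ℝ}

lemma IsProbDensity.truncGreen_nonneg (hp : IsProbDensity μ) (N : ℕ) (x : G) :
    0 ≤ truncGreen μ N x :=
  Finset.sum_nonneg fun k _ => hp.convPow_nonneg k x

lemma IsSymmetric.hasSum_truncGreen_mul (hs : IsSymmetric μ) (hp : IsProbDensity μ)
    (N : ℕ) (g : G) :
    HasSum (fun x => truncGreen μ N x * truncGreen μ N (x * g)) (truncGreenAutocorr μ N g) := by
  simp only [truncGreen, Finset.sum_mul_sum]
  exact hasSum_sum fun j _ => hasSum_sum fun k _ => hs.hasSum_convPow_mul_convPow hp j k g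

lemma IsSymmetric.hasSum_sq_truncGreen (hs : IsSymmetric μ) (hp : IsProbDensity μ) (N : ℕ) :
    HasSum (fun x => truncGreen μ N x ^ 2) (truncGreenAutocorr μ N 1) := by
  simpa only [mul_one, ← sq] using hs.hasSum_truncGreen_mul hp N 1

lemma IsSymmetric.translationEnergy_truncGreen (hs : IsSymmetric μ) (hp : IsProbDensity μ)
    (N : ℕ) (g : G) :
    translationEnergy (truncGreen μ N) g =
      2 * (truncGreenAutocorr μ N 1 - truncGreenAutocorr μ N g) := by
  rw [translationEnergy_eq (hs.hasSum_sq_truncGreen hp N).summable,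
    (hs.hasSum_sq_truncGreen hp N).tsum_eq, (hs.hasSum_truncGreen_mul hp N g).tsum_eq]

lemma IsSymmetric.hasSum_mul_truncGreenAutocorr (hs : IsSymmetric μ) (hp : IsProbDensity μ)
    (N : ℕ) :
    HasSum (fun y => μ y * truncGreenAutocorr μ N y)
      (∑ j ∈ Finset.range N, ∑ k ∈ Finset.range N, convPow μ (j + (k + 1)) 1) := by
  simp only [truncGreenAutocorr, Finset.mul_sum]
  refine hasSum_sum fun j _ => hasSum_sum fun k _ => ?_
  have h := hs.hasSum_convPow_mul_convPow hp 1 (j + k) 1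
  rw [add_comm 1, add_assoc] at h
  simpa only [hp.convPow_one, mul_one] using h

lemma truncGreenAutocorr_one_sub (μ : G → ℝ) (N : ℕ) :
    truncGreenAutocorr μ N 1 -
        ∑ j ∈ Finset.range N, ∑ k ∈ Finset.range N, convPow μ (j + (k + 1)) 1 =
      truncGreen μ N 1 - ∑ j ∈ Finset.range N, convPow μ (j + N) 1 := by
  rw [truncGreenAutocorr, truncGreen, ← Finset.sum_sub_distrib, ← Finset.sum_sub_distrib]
  refine Finset.sum_congr rfl fun j _ => ?_
  rw [← Finset.sum_sub_distrib, Finset.sum_range_sub' fun k => convPow μ (j + k) 1, add_zero]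

lemma IsSymmetric.mul_translationEnergy_truncGreen_le (hs : IsSymmetric μ)
    (hp : IsProbDensity μ) (N : ℕ) (g : G) :
    μ g * translationEnergy (truncGreen μ N) g ≤ 2 * truncGreen μ N 1 := by
  have hsum : HasSum (fun y => μ y * translationEnergy (truncGreen μ N) y)
      (2 * (truncGreen μ N 1 - ∑ j ∈ Finset.range N, convPow μ (j + N) 1)) := by
    have h := ((hp.2.mul_right (truncGreenAutocorr μ N 1)).sub
      (hs.hasSum_mul_truncGreenAutocorr hp N)).mul_left 2
    rw [one_mul, truncGreenAutocorr_one_sub] at h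
    refine h.congr_fun fun y => ?_
    rw [hs.translationEnergy_truncGreen hp]
    ring
  have hle := le_hasSum hsum g fun y _ => mul_nonneg (hp.1 y) (translationEnergy_nonneg _ y)
  have hnonneg : 0 ≤ ∑ j ∈ Finset.range N, convPow μ (j + N) 1 :=
    Finset.sum_nonneg fun j _ => hp.convPow_nonneg _ _
  linarith

lemma IsSymmetric.exists_translationEnergy_truncGreen_le (hs : IsSymmetric μ)
    (hp : IsProbDensity μ) (hg : GeneratesSupp μ) (g : G) :
    ∃ K : ℝ, 0 ≤ K ∧ ∀ N, translationEnergy (truncGreen μ N) g ≤ K * truncGreen μ N 1 := by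
  refine exists_translationEnergy_le_of_closure_eq_top hg
    (fun N => (hs.hasSum_sq_truncGreen hp N).summable) (fun a ha => ?_) g
  have hpos : 0 < μ a := (hp.1 a).lt_of_ne' ha
  refine ⟨2 / μ a, by positivity, fun N => ?_⟩
  rw [div_mul_eq_mul_div, le_div_iff₀' hpos]
  exact hs.mul_translationEnergy_truncGreen_le hp N a

lemma IsBinaryTree.transient {ι : Type*} [Finite ι] {t : ι → G}
    {X : ∀ n : ℕ, (Fin n → Bool) → G} (hX : IsBinaryTree t X) (hp : IsProbDensity μ)
    (hs : IsSymmetric μ) (hg : GeneratesSupp μ) : Transient μ := by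
  cases nonempty_fintype ι
  choose K hK0 hK using fun j => hs.exists_translationEnergy_truncGreen_le hp hg (t j)
  set C := (∑ j, √(K j)) * (1 - (√2)⁻¹)⁻¹
  have hC0 : 0 ≤ (1 - (√2)⁻¹)⁻¹ :=
    inv_nonneg.2 (sub_nonneg.2 (inv_le_one_of_one_le₀ Real.one_lt_sqrt_two.le))
  have hself (N : ℕ) : truncGreen μ N 1 ≤ C * √(truncGreen μ N 1) :=
    calc truncGreen μ N 1
        ≤ (∑ j, √(translationEnergy (truncGreen μ N) (t j))) * (1 - (√2)⁻¹)⁻¹ :=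
          hX.apply_one_le (hs.hasSum_sq_truncGreen hp N).summable
      _ ≤ (∑ j, √(K j) * √(truncGreen μ N 1)) * (1 - (√2)⁻¹)⁻¹ := by
          gcongr with j
          rw [← Real.sqrt_mul (hK0 j)]
          exact Real.sqrt_le_sqrt (hK j N)
      _ = C * √(truncGreen μ N 1) := by rw [← Finset.sum_mul, mul_right_comm]
  refine summable_of_sum_range_le (c := C ^ 2) (fun n => hp.convPow_nonneg n 1) fun N => ?_
  have hsq := Real.sq_sqrt (hp.truncGreen_nonneg N 1)
  change truncGreen μ N 1 ≤ C ^ 2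
  nlinarith [hself N, sq_nonneg (C - √(truncGreen μ N 1))]

lemma NonElemHyperbolic.transient (hG : NonElemHyperbolic G) (hp : IsProbDensity μ)
    (hs : IsSymmetric μ) (hg : GeneratesSupp μ) : Transient μ := by
  obtain ⟨t, X, hX⟩ := hG.exists_isBinaryTree
  exact hX.transient hp hs hg

end Transience

/-! ### Decay of the Green function -/

section GreenDecay

variable {μ : G → ℝ}

lemma IsSymmetric.convPow_add_le (hs : IsSymmetric μ) (hp : IsProbDensity μ) (j k : ℕ) (g : G) :
    convPow μ (j + k) g ≤ convPow μ (j + j) 1 + convPow μ (k + k) 1 := by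
  have hj := hs.hasSum_convPow_mul_convPow hp j j 1
  have hk := hasSum_comp_mul_right (hs.hasSum_convPow_mul_convPow hp k k 1) g
  refine hasSum_le (fun x => ?_) (hs.hasSum_convPow_mul_convPow hp j k g) (hj.add hk)
  rw [mul_one, mul_one]
  nlinarith [sq_nonneg (convPow μ j x - convPow μ k (x * g)), sq_nonneg (convPow μ j x),
    sq_nonneg (convPow μ k (x * g))]

lemma Transient.exists_summable_forall_convPow_le (ht : Transient μ) (hp : IsProbDensity μ)
    (hs : IsSymmetric μ) : ∃ b : ℕ → ℝ, Summable b ∧ ∀ n g, convPow μ n g ≤ b n := by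
  have heven : Summable fun k : ℕ => convPow μ (k + k) (1 : G) :=
    ht.comp_injective (i := fun k : ℕ => k + k) fun a b h => by simp only at h; omega
  have hhalf : Summable fun n : ℕ => convPow μ (n / 2 + n / 2) (1 : G) :=
    (HasSum.even_add_odd (f := fun n : ℕ => convPow μ (n / 2 + n / 2) (1 : G))
      (heven.congr fun k => by rw [Nat.mul_div_cancel_left k two_pos]).hasSum
      (heven.congr fun k => by rw [show (2 * k + 1) / 2 = k by omega]).hasSum).summable
  refine ⟨fun n => convPow μ (n / 2 + n / 2) 1 + convPow μ ((n + 1) / 2 + (n + 1) / 2) 1,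
    hhalf.add ((summable_nat_add_iff 1).2 hhalf), fun n g => ?_⟩
  have h := hs.convPow_add_le hp (n / 2) ((n + 1) / 2) g
  rwa [show n / 2 + (n + 1) / 2 = n by omega] at h

lemma Transient.summable_convPow (ht : Transient μ) (hp : IsProbDensity μ) (hs : IsSymmetric μ)
    (g : G) : Summable fun n => convPow μ n g := by
  obtain ⟨b, hb, hle⟩ := ht.exists_summable_forall_convPow_le hp hs
  exact hb.of_nonneg_of_le (fun n => hp.convPow_nonneg n g) fun n => hle n g

lemma Transient.tendsto_greenFn_cofinite (ht : Transient μ) (hp : IsProbDensity μ)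
    (hs : IsSymmetric μ) : Tendsto (greenFn μ 1) cofinite (𝓝 0) := by
  obtain ⟨b, hb, hle⟩ := ht.exists_summable_forall_convPow_le hp hs
  have h := tendsto_tsum_of_dominated_convergence (f := fun (g : G) n => convPow μ n g)
    (g := fun _ => (0 : ℝ)) hb (fun n => (hp.hasSum_convPow n).summable.tendsto_cofinite_zero)
    (.of_forall fun g n => by
      rw [Real.norm_of_nonneg (hp.convPow_nonneg n g)]
      exact hle n g)
  rw [tsum_zero] at h
  exact h.congr fun g => by rw [greenFn, inv_one, one_mul]

end GreenDecay

/-! ### Sums over paths -/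

section PathSum

lemma isFirstHitPath_nil {x y : G} : IsFirstHitPath x y [] ↔ x = y := by
  simp [IsFirstHitPath, walkPositions]

lemma isFirstHitPath_cons {x y a : G} {l : List G} :
    IsFirstHitPath x y (a :: l) ↔ x ≠ y ∧ IsFirstHitPath (x * a) y l := by
  have hne : l.scanl (fun p a => p * a) (x * a) ≠ [] := by cases l <;> simp
  simp only [IsFirstHitPath, walkPositions, List.scanl_cons]
  rw [List.dropLast_cons_of_ne_nil hne, List.getLast?_cons, List.mem_cons,
    List.getLast?_eq_some_getLast hne, Option.getD_some]
  tauto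

lemma IsFirstHitPath.mul_prod_eq {x y : G} {l : List G} (h : IsFirstHitPath x y l) :
    x * l.prod = y := by
  induction l generalizing x with
  | nil => simpa [isFirstHitPath_nil] using h
  | cons a l ih => rw [List.prod_cons, ← mul_assoc, ih (isFirstHitPath_cons.1 h).2]

lemma IsFirstHitPath.eq_of_append_eq {x y : G} {l l' k k' : List G} (h : IsFirstHitPath x y l)
    (h' : IsFirstHitPath x y l') (heq : l ++ k = l' ++ k') : l = l' := by
  induction l generalizing x l' with
  | nil =>
    cases l' with
    | nil => rfl
    | cons a l' => exact absurd (isFirstHitPath_nil.1 h) (isFirstHitPath_cons.1 h').1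
  | cons a l ih =>
    cases l' with
    | nil => exact absurd (isFirstHitPath_nil.1 h') (isFirstHitPath_cons.1 h).1
    | cons b l' =>
      obtain ⟨rfl, htail⟩ := List.cons.inj heq
      rw [ih (isFirstHitPath_cons.1 h).2 (isFirstHitPath_cons.1 h').2 htail]

lemma exists_isFirstHitPath_append_eq {x y : G} {l : List G} (h : x * l.prod = y) :
    ∃ l₁ l₂, IsFirstHitPath x y l₁ ∧ l₁ ++ l₂ = l := by
  induction l generalizing x with
  | nil => exact ⟨[], [], isFirstHitPath_nil.2 (by simpa using h), rfl⟩
  | cons a l ih =>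
    by_cases hxy : x = y
    · exact ⟨[], a :: l, isFirstHitPath_nil.2 hxy, rfl⟩
    · rw [List.prod_cons, ← mul_assoc] at h
      obtain ⟨l₁, l₂, hl₁, rfl⟩ := ih h
      exact ⟨a :: l₁, l₂, isFirstHitPath_cons.2 ⟨hxy, hl₁⟩, rfl⟩

/-- The total weight of the paths from `x` to `y`, where a path is its list of increments and has as
weight the product of their `m`-weights: the Green function with values in `ℝ≥0∞`. -/
def ennGreen (m : G → ℝ≥0∞) (x y : G) : ℝ≥0∞ :=
  ∑' l : {l : List G // x * l.prod = y}, (l.1.map m).prod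

/-- The total weight of the paths from `x` that stop when they first hit `y`: the hitting
probability with values in `ℝ≥0∞`. -/
def ennHitProb (m : G → ℝ≥0∞) (x y : G) : ℝ≥0∞ :=
  ∑' l : {l : List G // IsFirstHitPath x y l}, (l.1.map m).prod

lemma ennConvPow_eq_tsum_list (m : G → ℝ≥0∞) (n : ℕ) (g : G) :
    ennConvPow m n g = ∑' l : {l : List G // l.length = n ∧ l.prod = g}, (l.1.map m).prod := by
  induction n generalizing g with
  | zero =>
    by_cases hg : g = 1
    · rw [tsum_eq_single ⟨[], rfl, by simp [hg]⟩]
      · simp [ennConvPow, hg]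
      · rintro ⟨l, hl, _⟩ hne
        exact absurd (Subtype.ext (List.length_eq_zero_iff.1 hl)) hne
    · have : IsEmpty {l : List G // l.length = 0 ∧ l.prod = g} :=
        ⟨fun ⟨l, hl, hprod⟩ => hg (by rw [← hprod, List.length_eq_zero_iff.1 hl, List.prod_nil])⟩
      simp [ennConvPow, hg]
  | succ n ih =>
    let prepend : (Σ y : G, {l : List G // l.length = n ∧ l.prod = y⁻¹ * g}) →
        {l : List G // l.length = n + 1 ∧ l.prod = g} := fun p =>
      ⟨p.1 :: p.2.1, by simp [p.2.2.1], by rw [List.prod_cons, p.2.2.2, mul_inv_cancel_left]⟩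
    have hprepend : Function.Bijective prepend := by
      constructor
      · rintro ⟨y, l, hl⟩ ⟨y', l', hl'⟩ h
        obtain ⟨rfl, rfl⟩ := List.cons.inj (congrArg Subtype.val h)
        rfl
      · rintro ⟨_ | ⟨y, l⟩, hlen, hprod⟩
        · simp at hlen
        · exact ⟨⟨y, l, by simpa using hlen, eq_inv_mul_of_mul_eq (by simpa using hprod)⟩, rfl⟩
    rw [add_comm n 1, ennConvPow_add, add_comm 1 n, ← (Equiv.ofBijective _ hprepend).tsum_eq,
      ENNReal.tsum_sigma']
    refine tsum_congr fun y => ?_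
    rw [ennConvPow_one, ih, ← ENNReal.tsum_mul_left]
    exact tsum_congr fun l => by simp [prepend]

lemma ennGreen_eq_tsum_ennConvPow (m : G → ℝ≥0∞) (x y : G) :
    ennGreen m x y = ∑' n, ennConvPow m n (x⁻¹ * y) := by
  let forgetLength : (Σ n : ℕ, {l : List G // l.length = n ∧ l.prod = x⁻¹ * y}) →
      {l : List G // x * l.prod = y} := fun p =>
    ⟨p.2.1, by rw [p.2.2.2, mul_inv_cancel_left]⟩
  have hforget : Function.Bijective forgetLength := by
    constructor
    · rintro ⟨_, l, rfl, hl⟩ ⟨_, l', rfl, hl'⟩ h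
      obtain rfl : l = l' := congrArg Subtype.val h
      rfl
    · rintro ⟨l, hl⟩
      exact ⟨⟨l.length, l, rfl, eq_inv_mul_of_mul_eq hl⟩, rfl⟩
  simp_rw [ennConvPow_eq_tsum_list]
  rw [ennGreen, ← (Equiv.ofBijective _ hforget).tsum_eq, ENNReal.tsum_sigma']
  rfl

/-- Concatenation of a path from `x` that stops when it first hits `y` with a path from `y`
to `z`. -/
def firstHitConcat (x y z : G)
    (p : {l : List G // IsFirstHitPath x y l} × {l : List G // y * l.prod = z}) :
    {l : List G // x * l.prod = z} :=
  ⟨p.1.1 ++ p.2.1, by rw [List.prod_append, ← mul_assoc, p.1.2.mul_prod_eq, p.2.2]⟩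

lemma firstHitConcat_injective (x y z : G) : Function.Injective (firstHitConcat x y z) := by
  rintro ⟨⟨l, hl⟩, k, hk⟩ ⟨⟨l', hl'⟩, k', hk'⟩ h
  have heq : l ++ k = l' ++ k' := congrArg Subtype.val h
  obtain rfl := hl.eq_of_append_eq hl' heq
  obtain rfl := List.append_cancel_left heq
  rfl

lemma firstHitConcat_self_surjective (x y : G) : Function.Surjective (firstHitConcat x y y) := by
  rintro ⟨l, hl⟩
  obtain ⟨l₁, l₂, hl₁, rfl⟩ := exists_isFirstHitPath_append_eq hl
  rw [List.prod_append, ← mul_assoc, hl₁.mul_prod_eq] at hl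
  exact ⟨(⟨l₁, hl₁⟩, ⟨l₂, hl⟩), rfl⟩

lemma ennHitProb_mul_ennGreen (m : G → ℝ≥0∞) (x y z : G) :
    ennHitProb m x y * ennGreen m y z =
      ∑' p, ((firstHitConcat x y z p).1.map m).prod := by
  simp only [firstHitConcat, List.map_append, List.prod_append]
  rw [ENNReal.tsum_prod', ennHitProb, ← ENNReal.tsum_mul_right]
  simp_rw [ennGreen, ← ENNReal.tsum_mul_left]

lemma ennHitProb_mul_ennGreen_le (m : G → ℝ≥0∞) (x y z : G) :
    ennHitProb m x y * ennGreen m y z ≤ ennGreen m x z := by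
  rw [ennHitProb_mul_ennGreen]
  exact ENNReal.tsum_comp_le_tsum_of_injective (firstHitConcat_injective x y z)
    fun l => (l.1.map m).prod

lemma ennHitProb_mul_ennGreen_self (m : G → ℝ≥0∞) (x y : G) :
    ennHitProb m x y * ennGreen m y y = ennGreen m x y := by
  rw [ennHitProb_mul_ennGreen]
  exact (Equiv.ofBijective _
    ⟨firstHitConcat_injective x y y, firstHitConcat_self_surjective x y⟩).tsum_eq
      fun l => (l.1.map m).prod

end PathSum

/-! ### The Green function and the Green metric -/

section Green

variable {μ : G → ℝ}

lemma IsProbDensity.ofReal_prod_map {α : Type*} {p : α → ℝ} (hp : IsProbDensity p) (l : List α) :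
    ENNReal.ofReal (l.map p).prod = (l.map fun a => ENNReal.ofReal (p a)).prod := by
  induction l with
  | nil => exact ENNReal.ofReal_one
  | cons a l ih =>
    rw [List.map_cons, List.map_cons, List.prod_cons, List.prod_cons,
      ENNReal.ofReal_mul (hp.1 a), ih]

lemma IsProbDensity.hitProb_eq_toReal (hp : IsProbDensity μ) (x y : G) :
    hitProb μ x y = (ennHitProb (fun g => ENNReal.ofReal (μ g)) x y).toReal := by
  have hnonneg (l : List G) : 0 ≤ (l.map μ).prod :=
    List.prod_nonneg (List.forall_mem_map.2 fun a _ => hp.1 a)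
  simp only [ennHitProb, ← hp.ofReal_prod_map]
  rw [ENNReal.tsum_toReal_eq fun _ => ENNReal.ofReal_ne_top, hitProb]
  exact tsum_congr fun l => (ENNReal.toReal_ofReal (hnonneg l)).symm

lemma IsProbDensity.greenFn_eq_toReal (hp : IsProbDensity μ) (x y : G) :
    greenFn μ x y = (ennGreen (fun g => ENNReal.ofReal (μ g)) x y).toReal := by
  rw [ennGreen_eq_tsum_ennConvPow, ENNReal.tsum_toReal_eq (hp.ennConvPow_ne_top · _), greenFn]
  exact tsum_congr fun n => hp.convPow_eq_toReal n _

lemma greenFn_mul_left (μ : G → ℝ) (g x y : G) : greenFn μ (g * x) (g * y) = greenFn μ x y := by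
  simp only [greenFn, mul_inv_rev, mul_assoc, inv_mul_cancel_left]

lemma greenFn_self (μ : G → ℝ) (x : G) : greenFn μ x x = greenFn μ 1 1 := by
  simpa only [mul_one] using greenFn_mul_left μ x 1 1

lemma IsSymmetric.greenFn_comm (hs : IsSymmetric μ) (hp : IsProbDensity μ) (x y : G) :
    greenFn μ x y = greenFn μ y x :=
  tsum_congr fun n => by rw [← hs.convPow_inv hp, mul_inv_rev, inv_inv]

lemma IsProbDensity.greenFn_eq_hitProb_mul (hp : IsProbDensity μ) (x y : G) :
    greenFn μ x y = hitProb μ x y * greenFn μ 1 1 := by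
  rw [← greenFn_self μ y, hp.greenFn_eq_toReal, hp.greenFn_eq_toReal, hp.hitProb_eq_toReal,
    ← ENNReal.toReal_mul, ennHitProb_mul_ennGreen_self]

lemma Transient.ennGreen_ne_top (ht : Transient μ) (hp : IsProbDensity μ) (hs : IsSymmetric μ)
    (x y : G) : ennGreen (fun g => ENNReal.ofReal (μ g)) x y ≠ ∞ := by
  rw [ennGreen_eq_tsum_ennConvPow]
  convert (ht.summable_convPow hp hs (x⁻¹ * y)).tsum_ofReal_ne_top with n
  rw [hp.convPow_eq_toReal, ENNReal.ofReal_toReal (hp.ennConvPow_ne_top n _)]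

lemma Transient.hitProb_mul_greenFn_le (ht : Transient μ) (hp : IsProbDensity μ)
    (hs : IsSymmetric μ) (x y z : G) : hitProb μ x y * greenFn μ y z ≤ greenFn μ x z := by
  rw [hp.greenFn_eq_toReal, hp.greenFn_eq_toReal, hp.hitProb_eq_toReal, ← ENNReal.toReal_mul]
  exact ENNReal.toReal_mono (ht.ennGreen_ne_top hp hs x z) (ennHitProb_mul_ennGreen_le _ x y z)

lemma Transient.greenFn_pos (ht : Transient μ) (hp : IsProbDensity μ) (hs : IsSymmetric μ)
    (hg : GeneratesSupp μ) (x y : G) : 0 < greenFn μ x y := by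
  obtain ⟨l, hl, hprod⟩ := exists_list_prod_eq_of_closure_eq_top hg (x⁻¹ * y)
  have hweight : (l.map fun g => ENNReal.ofReal (μ g)).prod ≠ 0 := by
    rw [Ne, List.prod_eq_zero_iff, List.mem_map]
    rintro ⟨a, ha, h0⟩
    have h0 : μ a = 0 := le_antisymm (ENNReal.ofReal_eq_zero.1 h0) (hp.1 a)
    exact (hl a ha).elim (fun h => h h0) fun h => h ((hs a).trans h0)
  rw [hp.greenFn_eq_toReal]
  refine ENNReal.toReal_pos (fun h => hweight ?_) (ht.ennGreen_ne_top hp hs x y)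
  exact ENNReal.tsum_eq_zero.1 h ⟨l, by rw [hprod, mul_inv_cancel_left]⟩

lemma Transient.greenDist_eq_sub_log (ht : Transient μ) (hp : IsProbDensity μ)
    (hs : IsSymmetric μ) (hg : GeneratesSupp μ) (x y : G) :
    greenDist μ x y = Real.log (greenFn μ 1 1) - Real.log (greenFn μ x y) := by
  have h0 := (ht.greenFn_pos hp hs hg 1 1).ne'
  have h := (ht.greenFn_pos hp hs hg x y).ne'
  rw [hp.greenFn_eq_hitProb_mul x y] at h ⊢
  rw [Real.log_mul (left_ne_zero_of_mul h) h0, greenDist]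
  ring

lemma Transient.greenFn_eq_mul_exp (ht : Transient μ) (hp : IsProbDensity μ)
    (hs : IsSymmetric μ) (hg : GeneratesSupp μ) (x y : G) :
    greenFn μ x y = greenFn μ 1 1 * Real.exp (-greenDist μ x y) := by
  have h0 := ht.greenFn_pos hp hs hg 1 1
  rw [ht.greenDist_eq_sub_log hp hs hg, neg_sub, Real.exp_sub, Real.exp_log h0,
    Real.exp_log (ht.greenFn_pos hp hs hg x y), mul_div_cancel₀ _ h0.ne']

lemma Transient.greenDist_isPseudometricFun (ht : Transient μ) (hp : IsProbDensity μ)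
    (hs : IsSymmetric μ) (hg : GeneratesSupp μ) : IsPseudometricFun (greenDist μ) where
  refl x := by rw [ht.greenDist_eq_sub_log hp hs hg, greenFn_self μ x, sub_self]
  symm x y := by
    rw [ht.greenDist_eq_sub_log hp hs hg, ht.greenDist_eq_sub_log hp hs hg, hs.greenFn_comm hp x y]
  triangle x y z := by
    have hpos := ht.greenFn_pos hp hs hg
    have hF : 0 < hitProb μ x y :=
      pos_of_mul_pos_left (hp.greenFn_eq_hitProb_mul x y ▸ hpos x y) (hpos 1 1).le
    have h := Real.log_le_log (mul_pos hF (hpos y z)) (ht.hitProb_mul_greenFn_le hp hs x y z)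
    rw [Real.log_mul hF.ne' (hpos y z).ne'] at h
    rw [ht.greenDist_eq_sub_log hp hs hg x z, ht.greenDist_eq_sub_log hp hs hg y z, greenDist]
    linarith

lemma Transient.greenDist_leftInvariant (ht : Transient μ) (hp : IsProbDensity μ)
    (hs : IsSymmetric μ) (hg : GeneratesSupp μ) : LeftInvariant (greenDist μ) := fun g x y => by
  rw [ht.greenDist_eq_sub_log hp hs hg, ht.greenDist_eq_sub_log hp hs hg, greenFn_mul_left]

lemma Transient.finite_setOf_greenDist_le (ht : Transient μ) (hp : IsProbDensity μ)
    (hs : IsSymmetric μ) (hg : GeneratesSupp μ) (K : ℝ) : {g | greenDist μ 1 g ≤ K}.Finite := by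
  have hpos := ht.greenFn_pos hp hs hg 1 1
  have h : ∀ᶠ g in cofinite, greenFn μ 1 g < greenFn μ 1 1 * Real.exp (-K) :=
    (ht.tendsto_greenFn_cofinite hp hs).eventually_lt_const (by positivity)
  refine (Filter.eventually_cofinite.1 h).subset fun g hgK => ?_
  rw [mem_ofPred_eq, not_lt, ht.greenFn_eq_mul_exp hp hs hg 1 g]
  rw [mem_ofPred_eq] at hgK
  gcongr

end Green

/-! ### Quasigeodesics in hyperbolic spaces -/

section Quasigeodesic

variable {X : Type*} {d : X → X → ℝ} {δ Λ D : ℝ}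

/-- The finite sequence `a 0, …, a n` is a quasigeodesic for `d` with multiplicative constant `Λ`.
The additive error is normalized to `1` in the lower bound, and consecutive points are at distance
at most `Λ`. -/
structure IsQuasigeodesicSeq (d : X → X → ℝ) (Λ : ℝ) (n : ℕ) (a : ℕ → X) : Prop where
  dist_le : ∀ i j, i ≤ n → j ≤ n → d (a i) (a j) ≤ Λ * |(i : ℝ) - j|
  le_dist : ∀ i j, i ≤ n → j ≤ n → |(i : ℝ) - j| / Λ - 1 ≤ d (a i) (a j)

lemma IsQuasigeodesicSeq.drop {n m : ℕ} {a : ℕ → X} (ha : IsQuasigeodesicSeq d Λ n a)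
    (hm : m ≤ n) : IsQuasigeodesicSeq d Λ (n - m) fun k => a (m + k) where
  dist_le i j hi hj := by simpa using ha.dist_le (m + i) (m + j) (by omega) (by omega)
  le_dist i j hi hj := by simpa using ha.le_dist (m + i) (m + j) (by omega) (by omega)

lemma IsQuasigeodesicSeq.reverse {n m : ℕ} {a : ℕ → X} (ha : IsQuasigeodesicSeq d Λ n a)
    (hm : m ≤ n) : IsQuasigeodesicSeq d Λ m fun k => a (m - k) where
  dist_le i j hi hj := by
    have h := ha.dist_le (m - i) (m - j) (by omega) (by omega)
    rwa [Nat.cast_sub hi, Nat.cast_sub hj, sub_sub_sub_cancel_left, abs_sub_comm] at h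
  le_dist i j hi hj := by
    have h := ha.le_dist (m - i) (m - j) (by omega) (by omega)
    rwa [Nat.cast_sub hi, Nat.cast_sub hj, sub_sub_sub_cancel_left, abs_sub_comm] at h

lemma exists_last_le_of_step_le {f : ℕ → ℝ} (h₀ : f 0 ≤ D + Λ) {m : ℕ}
    (hstep : ∀ k < m, f (k + 1) ≤ f k + Λ) (hm : D ≤ f m) :
    ∃ i ≤ m, f i ≤ D + Λ ∧ ∀ k, i ≤ k → k ≤ m → D ≤ f k := by
  induction m with
  | zero => exact ⟨0, le_rfl, h₀, fun k _ hk => Nat.le_zero.1 hk ▸ hm⟩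
  | succ m ih =>
    rcases le_or_gt D (f m) with hDm | hDm
    · obtain ⟨i, him, hi, hlast⟩ := ih (fun k hk => hstep k (hk.trans m.lt_succ_self)) hDm
      refine ⟨i, him.trans m.le_succ, hi, fun k hik hk => ?_⟩
      rcases Nat.le_succ_iff.1 hk with hk | rfl
      exacts [hlast k hik hk, hm]
    · exact ⟨m + 1, le_rfl, (hstep m m.lt_succ_self).trans (by linarith),
        fun k hik hk => le_antisymm hk hik ▸ hm⟩

/-- Since the lower bound `b` gains `δ` over `L` steps, the loss of `δ` in each use of the four
point condition is compensated, and the total loss does not depend on the length of the chain. -/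
lemma IsHyperbolicWith.sub_le_gromov_of_chain (h : IsHyperbolicWith d δ)
    (hd : IsPseudometricFun d) {w : X} {a : ℕ → X} {b : ℕ → ℝ} {i m L : ℕ} (hL : 0 < L)
    (hb : ∀ j, b j + δ ≤ b (j + L))
    (hnear : ∀ j k, i ≤ j → j ≤ k → k ≤ m → k ≤ j + L → b j ≤ gromov d w (a j) (a k))
    (him : i ≤ m) : b i - δ ≤ gromov d w (a i) (a m) := by
  by_cases hm : m ≤ i + L
  · linarith [hnear i m le_rfl him le_rfl hm, h.nonneg w]
  · have hfar : b (i + L) - δ ≤ gromov d w (a (i + L)) (a m) :=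
      h.sub_le_gromov_of_chain hd hL hb (fun j k hj => hnear j k (by omega)) (by omega)
    have hclose := hnear i (i + L) le_rfl (by omega) (by omega) le_rfl
    rw [gromov_comm hd] at hclose
    have hmin : b i ≤ min (gromov d w (a (i + L)) (a i)) (gromov d w (a (i + L)) (a m)) :=
      le_min hclose (by linarith [hb i])
    linarith [h w (a (i + L)) (a i) (a m)]
termination_by m - i

lemma IsQuasigeodesicSeq.convexComb_le_dist {m j : ℕ} {a : ℕ → X} {ε : ℝ}
    (ha : IsQuasigeodesicSeq d Λ m a) (hε : 0 ≤ ε) (hε₁ : ε ≤ 1) (hj : j ≤ m)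
    (hD : D ≤ d (a 0) (a j)) : (1 - ε) * D + ε / Λ * j - ε ≤ d (a 0) (a j) := by
  have hlin : (j : ℝ) / Λ - 1 ≤ d (a 0) (a j) := by simpa using ha.le_dist 0 j m.zero_le hj
  have : 0 ≤ 1 - ε := sub_nonneg.2 hε₁
  calc (1 - ε) * D + ε / Λ * j - ε = (1 - ε) * D + ε * (j / Λ - 1) := by ring
    _ ≤ (1 - ε) * d (a 0) (a j) + ε * d (a 0) (a j) := by gcongr
    _ = d (a 0) (a j) := by ring

/-- The point `a i` is the last exit of the sequence from the ball of radius `D` around `a 0`. After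
it, the distance to `a 0` is at least `D` and at least linear in the index, so interpolating with
weight `ε` gives the linear growth needed to chain Gromov products with bounded loss. -/
lemma IsHyperbolicWith.exists_le_gromov_of_isQuasigeodesicSeq (h : IsHyperbolicWith d δ)
    (hd : IsPseudometricFun d) {ε : ℝ} (hΛ : 0 < Λ) (hε : 0 < ε) (hε₁ : ε ≤ 1) :
    ∃ C, ∀ (m : ℕ) (a : ℕ → X), IsQuasigeodesicSeq d Λ m a →
      ∀ D, 0 ≤ D → D ≤ d (a 0) (a m) → ∃ i ≤ m, D ≤ d (a 0) (a i) ∧ d (a 0) (a i) ≤ D + Λ ∧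
        (1 - ε) * D - C ≤ gromov d (a 0) (a i) (a m) := by
  obtain ⟨L, hL⟩ := exists_nat_gt (max 0 (δ / (ε / Λ)))
  have hL₀ : 0 < L := by exact_mod_cast (le_max_left _ _).trans_lt hL
  have hgain : δ ≤ ε / Λ * L :=
    (div_le_iff₀' (by positivity)).1 ((le_max_right _ _).trans hL.le)
  refine ⟨ε + Λ * L / 2 + δ, fun m a ha D hD hDm => ?_⟩
  obtain ⟨i, him, hi, hlast⟩ := exists_last_le_of_step_le (f := fun k => d (a 0) (a k)) (Λ := Λ)
    (by rw [hd.refl]; positivity)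
    (fun k hk => (hd.triangle _ (a k) _).trans
      (add_le_add_right (by simpa using ha.dist_le k (k + 1) (by omega) hk) _)) hDm
  let b : ℕ → ℝ := fun j => (1 - ε) * D + ε / Λ * j - ε
  have hb : ∀ j, i ≤ j → j ≤ m → b j ≤ d (a 0) (a j) := fun j hij hjm =>
    ha.convexComb_le_dist hε.le hε₁ hjm (hlast j hij hjm)
  have hmono : Monotone b := fun j k hjk => by
    simp only [b]
    gcongr
  have hnear : ∀ j k, i ≤ j → j ≤ k → k ≤ m → k ≤ j + L →
      b j - Λ * L / 2 ≤ gromov d (a 0) (a j) (a k) := by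
    intro j k hij hjk hkm hkL
    have hjk' : |(j : ℝ) - k| ≤ L := by
      rw [abs_sub_comm, abs_of_nonneg (sub_nonneg.2 (Nat.cast_le.2 hjk))]
      exact sub_le_iff_le_add'.2 (by exact_mod_cast hkL)
    have hstep := (ha.dist_le j k (hjk.trans hkm) hkm).trans
      (mul_le_mul_of_nonneg_left hjk' hΛ.le)
    rw [gromov, hd.symm _ (a 0), hd.symm _ (a 0)]
    linarith [hb j hij (hjk.trans hkm), hmono hjk, hb k (hij.trans hjk) hkm]
  refine ⟨i, him, hlast i le_rfl him, hi, le_trans ?_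
    (h.sub_le_gromov_of_chain hd (b := fun j => b j - Λ * L / 2) hL₀ (fun j => ?_) hnear him)⟩
  · linarith [show 0 ≤ ε / Λ * i by positivity]
  · simp only [b]
    push_cast
    linarith

lemma IsHyperbolicWith.sub_le_gromov_of_le (h : IsHyperbolicWith d δ) (hd : IsPseudometricFun d)
    {w u x y v : X} {t : ℝ} (hux : t ≤ gromov d w u x) (hxy : t ≤ gromov d w x y)
    (hyv : t ≤ gromov d w v y) : t - 2 * δ ≤ gromov d w u v := by
  rw [gromov_comm hd] at hux hyv
  have huy : t - δ ≤ gromov d w y u := by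
    rw [gromov_comm hd]
    exact (sub_le_sub_right (le_min hux hxy) δ).trans (h w x u y)
  have hyv' : t - δ ≤ gromov d w y v := by linarith [h.nonneg w]
  linarith [h w y u v, le_min huy hyv']

lemma IsQuasigeodesicSeq.gromov_le {n l m k : ℕ} {p : ℕ → X} (hp : IsQuasigeodesicSeq d Λ n p)
    (hd : IsPseudometricFun d) (hΛ : 0 < Λ) (hlm : l ≤ m) (hmk : m ≤ k) (hkn : k ≤ n)
    (hl : D ≤ d (p m) (p l)) (hl' : d (p m) (p l) ≤ D + Λ)
    (hk : D ≤ d (p m) (p k)) (hk' : d (p m) (p k) ≤ D + Λ) :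
    gromov d (p m) (p l) (p k) ≤ D - D / Λ ^ 2 + Λ + 1 / 2 := by
  have hml := hl.trans (hp.dist_le m l (hmk.trans hkn) ((hlm.trans hmk).trans hkn))
  have hmk' := hk.trans (hp.dist_le m k (hmk.trans hkn) hkn)
  have hlk := hp.le_dist l k ((hlm.trans hmk).trans hkn) hkn
  rw [abs_of_nonneg (sub_nonneg.2 (Nat.cast_le.2 hlm))] at hml
  rw [abs_sub_comm, abs_of_nonneg (sub_nonneg.2 (Nat.cast_le.2 hmk))] at hmk'
  rw [abs_sub_comm, abs_of_nonneg (sub_nonneg.2 (Nat.cast_le.2 (hlm.trans hmk)))] at hlk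
  have hspread : 2 * (D / Λ ^ 2) ≤ ((k : ℝ) - l) / Λ := by
    rw [le_div_iff₀ hΛ, show 2 * (D / Λ ^ 2) * Λ = 2 * D / Λ by field_simp, div_le_iff₀ hΛ]
    linarith
  rw [gromov, hd.symm (p l) (p m), hd.symm (p k) (p m)]
  linarith

/-- If the Gromov product `D` at `p m` is large, the sequence leaves the ball of radius `D` around
`p m` on both sides at points which fellow-travel, whereas they are `2 * D / Λ ^ 2` apart. -/
lemma IsHyperbolicWith.exists_gromov_le_of_isQuasigeodesicSeq (h : IsHyperbolicWith d δ)
    (hd : IsPseudometricFun d) (hΛ : 1 ≤ Λ) :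
    ∃ τ, ∀ (n : ℕ) (p : ℕ → X), IsQuasigeodesicSeq d Λ n p →
      ∀ m ≤ n, gromov d (p m) (p 0) (p n) ≤ τ := by
  have hΛ₀ : 0 < Λ := one_pos.trans_le hΛ
  set ε : ℝ := 1 / (2 * Λ ^ 2) with hε
  have hε₀ : 0 < ε := by positivity
  have hε₁ : ε ≤ 1 := (div_le_one (by positivity)).2 (by nlinarith)
  obtain ⟨C, hC⟩ := h.exists_le_gromov_of_isQuasigeodesicSeq hd hΛ₀ hε₀ hε₁
  refine ⟨(Λ + 1 / 2 + |C| + 2 * δ) / ε, fun n p hp m hm => ?_⟩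
  set w := p m with hw
  set D := gromov d w (p 0) (p n)
  have hD : 0 ≤ D := gromov_nonneg hd _ _ _
  obtain ⟨i, -, hDi, hiD, hgi⟩ := hC m _ (hp.reverse hm) D hD
    (by simpa only [Nat.sub_zero, Nat.sub_self] using gromov_le_left hd w (p 0) (p n))
  obtain ⟨j, hj, hDj, hjD, hgj⟩ := hC (n - m) _ (hp.drop hm) D hD
    (by simpa only [Nat.add_zero, Nat.add_sub_cancel' hm] using gromov_le_right hd w (p 0) (p n))
  simp only [Nat.sub_zero, Nat.sub_self, Nat.add_zero, Nat.add_sub_cancel' hm, ← hw]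
    at hDi hiD hgi hDj hjD hgj
  have hupper := hp.gromov_le hd hΛ₀ (m.sub_le i) (m.le_add_right j) (by omega) hDi hiD hDj hjD
  have hlower := h.sub_le_gromov_of_le hd (t := (1 - ε) * D - |C|)
    (by linarith [le_abs_self C]) (by linarith [abs_nonneg C, mul_nonneg hε₀.le hD] : _ ≤ D)
    (by linarith [le_abs_self C])
  have hε₂ : D / Λ ^ 2 = 2 * (ε * D) := by
    rw [hε]
    field_simp
  rw [le_div_iff₀' hε₀]
  linarith

end Quasigeodesic

/-! ### Left-invariant pseudometrics against the word metric -/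

section CoarseGeometry

variable {S : Finset G} {d : G → G → ℝ}

/-- `d` is bounded below by a linear function of the word metric of `S`. For the Green metric this
is the exponential decay (ED) of the Green function. -/
def IsLinearlyBoundedBelow (S : Finset G) (d : G → G → ℝ) : Prop :=
  ∃ c B : ℝ, 0 < c ∧ ∀ γ, c * wordDist S 1 γ ≤ d 1 γ + B

/-- `d` is additive up to a bounded error along word geodesics from `1`, with an error depending
only on the distance to the geodesic. For the Green metric this is the condition (QR). -/
def IsCoarselyAdditive (S : Finset G) (d : G → G → ℝ) : Prop :=
  ∀ r : ℝ, 0 ≤ r → ∃ K, ∀ γ γ', NearWordGeodesic S 1 γ γ' r → d 1 γ' + d γ' γ ≤ d 1 γ + K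

lemma LeftInvariant.exists_le_mul_wordDist (hd : LeftInvariant d) (hpm : IsPseudometricFun d)
    (hS : Generates S) : ∃ Λ, 1 ≤ Λ ∧ ∀ x y, d x y ≤ Λ * wordDist S x y := by
  set Λ := 1 + ∑ s ∈ S, d 1 s
  have hgen : ∀ a, a ∈ S ∨ a⁻¹ ∈ S → d 1 a ≤ Λ := by
    have hle : ∀ s ∈ S, d 1 s ≤ Λ := fun s hs => by
      linarith [Finset.single_le_sum (fun s _ => hpm.nonneg 1 s) hs]
    rintro a (ha | ha)
    exacts [hle a ha, hd.dist_one_inv hpm a ▸ hle _ ha]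
  have hword : ∀ l : List G, (∀ a ∈ l, a ∈ S ∨ a⁻¹ ∈ S) → d 1 l.prod ≤ Λ * l.length := by
    intro l
    induction l with
    | nil => simp [hpm.refl]
    | cons a l ih =>
      rw [List.forall_mem_cons, List.prod_cons, List.length_cons]
      rintro ⟨ha, hl⟩
      push_cast
      linarith [ih hl, hgen a ha, hpm.triangle 1 a (a * l.prod), hd.dist_mul_right a l.prod]
  refine ⟨Λ, by linarith [Finset.sum_nonneg fun s (_ : s ∈ S) => hpm.nonneg 1 s], fun x y => ?_⟩
  obtain ⟨l, hlen, hl, hprod⟩ := exists_list_length_eq_wordLength hS (x⁻¹ * y)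
  simpa only [hprod, hlen, hd.dist_one_inv_mul, wordDist] using hword l hl

lemma LeftInvariant.exists_forall_le_of_finite {d' : G → G → ℝ} (hd : LeftInvariant d)
    (hd' : LeftInvariant d') {R : ℝ} (hR : {g | d 1 g ≤ R}.Finite) :
    ∃ M, ∀ x y, d x y ≤ R → d' x y ≤ M := by
  obtain ⟨M, hM⟩ := (hR.image (d' 1)).bddAbove
  refine ⟨M, fun x y hxy => ?_⟩
  rw [← hd.dist_one_inv_mul] at hxy
  rw [← hd'.dist_one_inv_mul]
  exact hM ⟨_, hxy, rfl⟩

/-- Pull a word geodesic back to `X` point by point and apply the triangle inequality. -/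
lemma IsPseudometricFun.le_mul_wordDist_add_two {X : Type*} {d : X → X → ℝ}
    (hd : IsPseudometricFun d) (hS : Generates S) {f : X → G} {C M : ℝ} (hC : 0 ≤ C)
    (hf : ∀ g, ∃ x, wordDist S (f x) g ≤ C)
    (hM : ∀ x y, wordDist S (f x) (f y) ≤ 2 * C + 1 → d x y ≤ M) (x y : X) :
    d x y ≤ M * (wordDist S (f x) (f y) + 2) := by
  choose s hs using hf
  have hw := wordDist_isPseudometricFun hS
  obtain ⟨p, hp, hp₀, hpn⟩ := exists_isWordGeodesic hS (f x) (f y)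
  have hstep : ∀ k < wordLength S ((f x)⁻¹ * f y), d (s (p k)) (s (p (k + 1))) ≤ M := by
    intro k hk
    have hone : wordDist S (p k) (p (k + 1)) = 1 := by
      simpa using hp k (k + 1) hk.le hk
    refine hM _ _ ?_
    linarith [hs (p k), hs (p (k + 1)), hw.symm (p (k + 1)) (f (s (p (k + 1)))),
      hw.triangle (f (s (p k))) (p k) (f (s (p (k + 1)))),
      hw.triangle (p k) (p (k + 1)) (f (s (p (k + 1))))]
  have hchain : ∀ k ≤ wordLength S ((f x)⁻¹ * f y), d (s (p 0)) (s (p k)) ≤ k * M := by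
    intro k hk
    induction k with
    | zero => simp [hd.refl]
    | succ k ih =>
      push_cast
      linarith [ih (Nat.le_of_succ_le hk), hstep k hk,
        hd.triangle (s (p 0)) (s (p k)) (s (p (k + 1)))]
  have hx : d x (s (f x)) ≤ M := hM _ _ (by linarith [hs (f x), hw.symm (f x) (f (s (f x)))])
  have hy : d (s (f y)) y ≤ M := hM _ _ (by linarith [hs (f y)])
  have hxy := hchain _ le_rfl
  rw [hp₀, hpn] at hxy
  rw [wordDist]
  linarith [hd.triangle x (s (f x)) y, hd.triangle (s (f x)) (s (f y)) y]

/-- The quasi-isometry need not be the identity: it compares `d x y` with the word distance of the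
images of `x` and `y`, and finiteness of the balls of `d` leads back to that of `x` and `y`. -/
lemma LeftInvariant.isLinearlyBoundedBelow_of_quasiIsometric (hd : LeftInvariant d)
    (hS : Generates S) (hfin : ∀ K, {g | d 1 g ≤ K}.Finite)
    (hqi : QuasiIsometric d (wordDist S)) : IsLinearlyBoundedBelow S d := by
  obtain ⟨f, Λ, c, C, hΛ, -, hC, hf, hsurj⟩ := hqi
  have hΛ₀ : 0 < Λ := one_pos.trans_le hΛ
  have hw := wordDist_isPseudometricFun hS
  obtain ⟨M, hM⟩ := hd.exists_forall_le_of_finite (wordDist_leftInvariant (S := S))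
    (hfin (Λ * (2 * C + 1 + c)))
  have hnear : ∀ x y, wordDist S (f x) (f y) ≤ 2 * C + 1 → wordDist S x y ≤ |M| + 1 :=
    fun x y hxy => by
      have hdxy : d x y ≤ Λ * (2 * C + 1 + c) :=
        (div_le_iff₀' hΛ₀).1 (by linarith [(hf x y).1])
      linarith [hM x y hdxy, le_abs_self M]
  have hM₀ : 0 < |M| + 1 := by positivity
  refine ⟨1 / ((|M| + 1) * Λ), (c + 2) / Λ, by positivity, fun γ => ?_⟩
  have hle := (hw.le_mul_wordDist_add_two hS hC hsurj hnear 1 γ).trans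
    (mul_le_mul_of_nonneg_left (add_le_add_left (hf 1 γ).2 2) hM₀.le)
  rw [one_div_mul_eq_div, div_le_iff₀ (by positivity)]
  refine hle.trans_eq ?_
  field_simp
  ring

lemma LeftInvariant.mul_wordDist_le (hd : LeftInvariant d) {c B : ℝ}
    (h : ∀ γ, c * wordDist S 1 γ ≤ d 1 γ + B) (x y : G) : c * wordDist S x y ≤ d x y + B := by
  rw [← hd.dist_one_inv_mul x y, ← wordDist_leftInvariant.dist_one_inv_mul x y]
  exact h _

lemma IsLinearlyBoundedBelow.quasiIsometric (h : IsLinearlyBoundedBelow S d) (hS : Generates S)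
    (hd : LeftInvariant d) (hpm : IsPseudometricFun d) : QuasiIsometric d (wordDist S) := by
  obtain ⟨c, B, hc, hB⟩ := h
  obtain ⟨Λ, hΛ, hup⟩ := hd.exists_le_mul_wordDist hpm hS
  have hw := wordDist_isPseudometricFun hS
  have hB₀ : 0 ≤ B := by simpa [hw.refl, hpm.refl] using hB 1
  have hΛ₀ : 0 < max Λ (1 / c) := (one_pos.trans_le hΛ).trans_le (le_max_left _ _)
  refine ⟨id, max Λ (1 / c), B / c, 0, hΛ.trans (le_max_left _ _), by positivity, le_rfl,
    fun x y => ⟨?_, ?_⟩, fun y => ⟨y, (hw.refl y).le⟩⟩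
  · have hle : d x y ≤ max Λ (1 / c) * wordDist S x y :=
      (hup x y).trans (mul_le_mul_of_nonneg_right (le_max_left _ _) (hw.nonneg x y))
    exact (sub_le_self _ (by positivity)).trans ((div_le_iff₀' hΛ₀).2 hle)
  · calc wordDist S x y ≤ (d x y + B) / c := (le_div_iff₀' hc).2 (hd.mul_wordDist_le hB x y)
      _ = 1 / c * d x y + B / c := by ring
      _ ≤ max Λ (1 / c) * d x y + B / c := by
        gcongr
        exacts [hpm.nonneg x y, le_max_right _ _]

lemma IsLinearlyBoundedBelow.exists_isQuasigeodesicSeq (h : IsLinearlyBoundedBelow S d)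
    (hS : Generates S) (hd : LeftInvariant d) (hpm : IsPseudometricFun d) :
    ∃ Λ, 1 ≤ Λ ∧ (∀ x y, d x y ≤ Λ * wordDist S x y) ∧
      ∀ n p, IsWordGeodesic S n p → IsQuasigeodesicSeq d Λ n p := by
  obtain ⟨c, B, hc, hB⟩ := h
  obtain ⟨Λ, hΛ, hup⟩ := hd.exists_le_mul_wordDist hpm hS
  have hw := wordDist_isPseudometricFun hS
  have hΛ₁ : 1 ≤ max Λ (max B 1 / c) := hΛ.trans (le_max_left _ _)
  have hup' : ∀ x y, d x y ≤ max Λ (max B 1 / c) * wordDist S x y := fun x y =>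
    (hup x y).trans (mul_le_mul_of_nonneg_right (le_max_left _ _) (hw.nonneg x y))
  refine ⟨_, hΛ₁, hup', fun n p hp => ⟨fun i j hi hj => ?_, fun i j hi hj => ?_⟩⟩
  · exact hp i j hi hj ▸ hup' (p i) (p j)
  · have hpos := hpm.nonneg (p i) (p j)
    rw [← hp i j hi hj, sub_le_iff_le_add, div_le_iff₀' (one_pos.trans_le hΛ₁)]
    calc wordDist S (p i) (p j) ≤ (d (p i) (p j) + B) / c :=
          (le_div_iff₀' hc).2 (hd.mul_wordDist_le hB _ _)
      _ ≤ (max B 1 * d (p i) (p j) + max B 1) / c := by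
          gcongr
          exacts [le_mul_of_one_le_left hpos (le_max_right _ _), le_max_left _ _]
      _ = max B 1 / c * (d (p i) (p j) + 1) := by ring
      _ ≤ max Λ (max B 1 / c) * (d (p i) (p j) + 1) := by
          gcongr
          exact le_max_right _ _

lemma IsLinearlyBoundedBelow.isCoarselyAdditive (h : IsLinearlyBoundedBelow S d)
    (hS : Generates S) (hd : LeftInvariant d) (hpm : IsPseudometricFun d)
    (hyp : IsHyperbolic d) : IsCoarselyAdditive S d := by
  obtain ⟨Λ, hΛ, hup, hgeod⟩ := h.exists_isQuasigeodesicSeq hS hd hpm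
  obtain ⟨δ, -, hyp⟩ := hyp
  obtain ⟨τ, hτ⟩ := hyp.exists_gromov_le_of_isQuasigeodesicSeq hpm hΛ
  rintro r -
  refine ⟨2 * τ + 2 * (Λ * r), ?_⟩
  rintro γ γ' ⟨n, p, hp, hp₀, hpn, i, hi, hr⟩
  have hruler := hτ n p (hgeod n p hp) i hi
  have hclose : d γ' (p i) ≤ Λ * r :=
    (hup _ _).trans (mul_le_mul_of_nonneg_left hr (zero_le_one.trans hΛ))
  rw [hp₀, hpn, gromov, hpm.symm γ (p i)] at hruler
  linarith [hpm.triangle 1 (p i) γ', hpm.triangle γ' (p i) γ, hpm.symm (p i) γ']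

lemma IsCoarselyAdditive.exists_gromov_le (h : IsCoarselyAdditive S d) (hd : LeftInvariant d)
    (hpm : IsPseudometricFun d) (hS : Generates S) (hyp : IsHyperbolic (wordDist S)) (C : ℝ) :
    ∃ K, ∀ q x y, gromov (wordDist S) q x y ≤ C → gromov d q x y ≤ K := by
  obtain ⟨δ, hδ, hyp⟩ := hyp
  have hw := wordDist_isPseudometricFun hS
  obtain ⟨K, hK⟩ := h (|C| + 2 * δ + 1) (by positivity)
  have hone : ∀ q y, gromov (wordDist S) q 1 y ≤ C → gromov d q 1 y ≤ K / 2 := by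
    intro q y hC
    obtain ⟨p, hp, hp₁, hbetween⟩ := exists_nearWordGeodesic_dist_eq_floor hS 1 y
      (gromov_le_right hw 1 q y)
    have hfloor : |wordDist S 1 p - gromov (wordDist S) 1 q y| ≤ 1 := by
      rw [hp₁, abs_sub_comm, abs_of_nonneg]
      · linarith [Nat.lt_floor_add_one (gromov (wordDist S) 1 q y)]
      · exact sub_nonneg.2 (Nat.floor_le (gromov_nonneg hw 1 q y))
    have hqp : wordDist S q p ≤ |C| + 2 * δ + 1 := by
      linarith [hyp.dist_le_of_between hw hbetween q, le_abs_self C]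
    have hadd := hK y q (by simpa using hp.of_wordDist_le hS hqp)
    rw [gromov, hpm.symm y q]
    linarith
  refine ⟨K / 2, fun q x y hC => ?_⟩
  rw [← hd.gromov_mul_left x⁻¹, inv_mul_cancel]
  refine hone _ _ ?_
  rwa [← inv_mul_cancel x, wordDist_leftInvariant.gromov_mul_left]

lemma IsHyperbolic.of_forall_exists_gromov_le (hS : Generates S)
    (hyp : IsHyperbolic (wordDist S)) (hd : IsPseudometricFun d)
    (h : ∀ C : ℝ, ∃ K, ∀ q x y, gromov (wordDist S) q x y ≤ C → gromov d q x y ≤ K) :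
    IsHyperbolic d := by
  obtain ⟨δ, -, hyp⟩ := hyp
  obtain ⟨K, hK⟩ := h (1 + δ)
  obtain ⟨K', hK'⟩ := h δ
  have hw := wordDist_isPseudometricFun hS
  have key : ∀ w x y z, gromov (wordDist S) w x y ≤ gromov (wordDist S) w x z →
      gromov d w x y - (K + 2 * K') ≤ gromov d w y z := by
    intro w x y z hle
    obtain ⟨q, -, hwq, hbetween⟩ := exists_nearWordGeodesic_dist_eq_floor hS w x
      (gromov_le_left hw w x y)
    have hfloor : wordDist S w q ≤ gromov (wordDist S) w x y :=
      hwq.trans_le (Nat.floor_le (gromov_nonneg hw w x y))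
    have hy := hK' q w y (hyp.gromov_le_of_between hw hbetween hfloor)
    have hz := hK' q w z (hyp.gromov_le_of_between hw hbetween (hfloor.trans hle))
    have hxy := hK q x y (by
      linarith [hyp.gromov_le_sub_of_between hw hbetween hfloor,
        Nat.lt_floor_add_one (gromov (wordDist S) w x y)])
    unfold gromov at hy hz hxy ⊢
    linarith [hd.triangle y q z, hd.triangle x q w, hd.triangle y q w, hd.symm w q, hd.symm z q,
      hd.symm y w, hd.symm z w]
  refine ⟨|K + 2 * K'|, abs_nonneg _, fun w x y z => ?_⟩
  have habs := le_abs_self (K + 2 * K')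
  rcases le_total (gromov (wordDist S) w x y) (gromov (wordDist S) w x z) with hle | hle
  · linarith [key w x y z hle, min_le_left (gromov d w x y) (gromov d w x z)]
  · rw [gromov_comm hd w y z]
    linarith [key w x z y hle, min_le_right (gromov d w x y) (gromov d w x z)]

theorem quasiIsometric_wordDist_and_isHyperbolic_iff (hS : Generates S)
    (hyp : IsHyperbolic (wordDist S)) (hd : LeftInvariant d) (hpm : IsPseudometricFun d)
    (hfin : ∀ K, {g | d 1 g ≤ K}.Finite) :
    (QuasiIsometric d (wordDist S) ∧ IsHyperbolic d) ↔
      (IsLinearlyBoundedBelow S d ∧ IsCoarselyAdditive S d) where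
  mp := fun ⟨hqi, hhyp⟩ =>
    have hlow := hd.isLinearlyBoundedBelow_of_quasiIsometric hS hfin hqi
    ⟨hlow, hlow.isCoarselyAdditive hS hd hpm hhyp⟩
  mpr := fun ⟨hlow, hadd⟩ =>
    ⟨hlow.quasiIsometric hS hd hpm,
      .of_forall_exists_gromov_le hS hyp hpm (hadd.exists_gromov_le hd hpm hS hyp)⟩

end CoarseGeometry

/-! ### Exponential decay and quasiruler conditions -/

section EDQR

variable {S : Finset G} {μ : G → ℝ}

lemma Transient.isLinearlyBoundedBelow_greenDist_iff (ht : Transient μ) (hp : IsProbDensity μ)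
    (hs : IsSymmetric μ) (hg : GeneratesSupp μ) :
    IsLinearlyBoundedBelow S (greenDist μ) ↔ ∃ C₁ c₁ : ℝ, 0 < C₁ ∧ 0 < c₁ ∧
      ∀ γ : G, greenFn μ 1 γ ≤ C₁ * Real.exp (-c₁ * wordDist S 1 γ) := by
  have hA := ht.greenFn_pos hp hs hg 1 1
  have hiff (c B : ℝ) (γ : G) : c * wordDist S 1 γ ≤ greenDist μ 1 γ + B ↔
      greenFn μ 1 γ ≤ greenFn μ 1 1 * Real.exp B * Real.exp (-c * wordDist S 1 γ) := by
    rw [ht.greenFn_eq_mul_exp hp hs hg 1 γ, mul_assoc, ← Real.exp_add, mul_le_mul_iff_right₀ hA,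
      Real.exp_le_exp, neg_mul, neg_le, neg_add_rev, neg_neg, ← sub_eq_add_neg, sub_le_iff_le_add]
  constructor
  · rintro ⟨c, B, hc, hB⟩
    exact ⟨greenFn μ 1 1 * Real.exp B, c, by positivity, hc, fun γ => (hiff c B γ).1 (hB γ)⟩
  · rintro ⟨C₁, c₁, hC₁, hc₁, hED⟩
    refine ⟨c₁, Real.log (C₁ / greenFn μ 1 1), hc₁, fun γ => (hiff c₁ _ γ).2 ?_⟩
    rw [Real.exp_log (by positivity), mul_div_cancel₀ _ hA.ne']
    exact hED γ

lemma Transient.isCoarselyAdditive_greenDist_iff (ht : Transient μ) (hp : IsProbDensity μ)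
    (hs : IsSymmetric μ) (hg : GeneratesSupp μ) :
    IsCoarselyAdditive S (greenDist μ) ↔ ∀ r : ℝ, 0 ≤ r → ∃ C : ℝ, 0 < C ∧
      ∀ γ γ' : G, NearWordGeodesic S 1 γ γ' r →
        greenFn μ 1 γ ≤ C * greenFn μ 1 γ' * greenFn μ γ' γ := by
  have hA := ht.greenFn_pos hp hs hg 1 1
  have hiff (K : ℝ) (γ γ' : G) :
      greenDist μ 1 γ' + greenDist μ γ' γ ≤ greenDist μ 1 γ + K ↔
        greenFn μ 1 γ ≤ Real.exp K / greenFn μ 1 1 * greenFn μ 1 γ' * greenFn μ γ' γ := by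
    have hprod : Real.exp K / greenFn μ 1 1 * greenFn μ 1 γ' * greenFn μ γ' γ =
        greenFn μ 1 1 * Real.exp (K - greenDist μ 1 γ' - greenDist μ γ' γ) := by
      rw [ht.greenFn_eq_mul_exp hp hs hg 1 γ', ht.greenFn_eq_mul_exp hp hs hg γ' γ,
        sub_eq_add_neg, sub_eq_add_neg, Real.exp_add, Real.exp_add]
      field_simp
    rw [hprod, ht.greenFn_eq_mul_exp hp hs hg 1 γ, mul_le_mul_iff_right₀ hA, Real.exp_le_exp]
    constructor <;> intro h <;> linarith
  refine forall₂_congr fun r _ => ⟨?_, ?_⟩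
  · rintro ⟨K, hK⟩
    exact ⟨Real.exp K / greenFn μ 1 1, by positivity, fun γ γ' h => (hiff K γ γ').1 (hK γ γ' h)⟩
  · rintro ⟨C, hC, hQR⟩
    refine ⟨Real.log (C * greenFn μ 1 1), fun γ γ' h => (hiff _ γ γ').2 ?_⟩
    rw [Real.exp_log (by positivity), mul_div_cancel_right₀ _ hA.ne']
    exact hQR γ γ' h

theorem green_hyperbolic_iff_ED_and_QR_general (hS : Generates S)
    (hyp : IsHyperbolic (wordDist S)) (hp : IsProbDensity μ) (hs : IsSymmetric μ)
    (hg : GeneratesSupp μ) (ht : Transient μ) :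
    (QuasiIsometric (greenDist μ) (wordDist S) ∧ IsHyperbolic (greenDist μ)) ↔
      ((∃ C₁ c₁ : ℝ, 0 < C₁ ∧ 0 < c₁ ∧
          ∀ γ : G, greenFn μ 1 γ ≤ C₁ * Real.exp (-c₁ * wordDist S 1 γ)) ∧
        ∀ r : ℝ, 0 ≤ r → ∃ C : ℝ, 0 < C ∧
          ∀ γ γ' : G, NearWordGeodesic S 1 γ γ' r →
            greenFn μ 1 γ ≤ C * greenFn μ 1 γ' * greenFn μ γ' γ) := by
  rw [← ht.isLinearlyBoundedBelow_greenDist_iff hp hs hg,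
    ← ht.isCoarselyAdditive_greenDist_iff hp hs hg]
  exact quasiIsometric_wordDist_and_isHyperbolic_iff hS hyp
    (ht.greenDist_leftInvariant hp hs hg) (ht.greenDist_isPseudometricFun hp hs hg)
    (ht.finite_setOf_greenDist_le hp hs hg)

end EDQR

/-- **Proposition 3.5.**  The Green metric of a symmetric random walk on a non-elementary
hyperbolic group is quasi-isometric to the word metric and hyperbolic if and only if
(ED) the Green function decays exponentially in the word metric, and (QR) the Green
function is submultiplicative along word geodesics:
`G(e,γ) ≤ C(r) G(e,γ') G(γ',γ)` whenever `γ'` is within distance `r` of a word geodesic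
from `e` to `γ`. -/
theorem green_hyperbolic_iff_ED_and_QR
    {G : Type*} [Group G] (hG : NonElemHyperbolic G)
    (S : Finset G) (hS : Generates S)
    (μ : G → ℝ) (hprob : IsProbDensity μ) (hsymm : IsSymmetric μ)
    (hgen : GeneratesSupp μ) :
    (QuasiIsometric (greenDist μ) (wordDist S) ∧ IsHyperbolic (greenDist μ)) ↔
      ((∃ C₁ c₁ : ℝ, 0 < C₁ ∧ 0 < c₁ ∧
          ∀ γ : G, greenFn μ 1 γ ≤ C₁ * Real.exp (-c₁ * wordDist S 1 γ)) ∧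
        ∀ r : ℝ, 0 ≤ r → ∃ C : ℝ, 0 < C ∧
          ∀ γ γ' : G, NearWordGeodesic S 1 γ γ' r →
            greenFn μ 1 γ ≤ C * greenFn μ 1 γ' * greenFn μ γ' γ) := by
  exact green_hyperbolic_iff_ED_and_QR_general hS (hG.2.2 S hS).1 hprob hsymm hgen
    (hG.transient hprob hsymm hgen)

end GHM
end
end
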